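/- arXiv:1109.5250 — 2 statements merged into one kernel-verified Lean document; each statement's English description precedes it below -/
import Mathlib

section
/- Let s > 1, let u ∈ L¹(ℝ^d) have compact support, let Γ₀ ⊂⊂ Γ be open cones in ℝ^d ∖ {0}, and suppose there are C, k > 0 with |û(ξ)| ≤ C·exp(−k·|ξ|^{1/s}) for all ξ ∈ Γ. Then for every s-cutoff φ there exist C', k' > 0 such that |ℱ(φu)(ξ)| ≤ C'·exp(−k'·|ξ|^{1/s}) for all ξ ∈ Γ₀. -/
open MeasureTheory Complex Set
open scoped ENNReal RealInnerProductSpace NNReal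

noncomputable section

namespace Paper

variable {d : ℕ}

/-- The Fourier transform, normalized by `(2π)^{-d/2}`. -/
def FT (f : EuclideanSpace ℝ (Fin d) → ℂ) (ξ : EuclideanSpace ℝ (Fin d)) : ℂ :=
  ((2 * Real.pi) ^ (-(d : ℝ) / 2) : ℝ) *
    ∫ x, f x * Complex.exp (-(⟪x, ξ⟫ : ℝ) * Complex.I)

/-- The short-time Fourier transform `V_φ f (x, ξ)`. -/
def STFT (φ f : EuclideanSpace ℝ (Fin d) → ℂ) (x ξ : EuclideanSpace ℝ (Fin d)) : ℂ :=
  ((2 * Real.pi) ^ (-(d : ℝ) / 2) : ℝ) *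
    ∫ y, f y * (starRingEnd ℂ) (φ (y - x)) * Complex.exp (-(⟪ξ, y⟫ : ℝ) * Complex.I)

/-- A cone in `ℝ^d ∖ {0}`. -/
def IsCone (Γ : Set (EuclideanSpace ℝ (Fin d))) : Prop :=
  (0 : EuclideanSpace ℝ (Fin d)) ∉ Γ ∧ ∀ ξ ∈ Γ, ∀ t : ℝ, 0 < t → t • ξ ∈ Γ

/-- An `s`-cutoff: smooth, compactly supported, with Fourier transform decaying faster
than every `exp (-N |ξ|^{1/s})`. -/
def IsSCutoff (s : ℝ) (φ : EuclideanSpace ℝ (Fin d) → ℂ) : Prop :=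
  ContDiff ℝ (⊤ : ℕ∞) φ ∧ HasCompactSupport φ ∧
    ∀ N : ℝ, 0 < N → ∃ C : ℝ, 0 < C ∧
      ∀ ξ, ‖FT φ ξ‖ ≤ C * Real.exp (-N * ‖ξ‖ ^ (1 / s))

/-- An `s`-admissible weight: positive, measurable, and moderate with respect to an even
submultiplicative weight of sub-exponential growth of order `1/s`. -/
def IsSAdmissible (s : ℝ) (ω : EuclideanSpace ℝ (Fin d) → ℝ) : Prop :=
  Measurable ω ∧ (∀ x, 0 < ω x) ∧
    ∃ v : EuclideanSpace ℝ (Fin d) → ℝ, Measurable v ∧ (∀ x, 0 < v x) ∧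
      (∀ x, v (-x) = v x) ∧ (∀ x y, v (x + y) ≤ v x * v y) ∧
      ∃ C₀ k₀ C₁ : ℝ, 0 < C₀ ∧ 0 < k₀ ∧ 0 < C₁ ∧
        (∀ ξ, v ξ ≤ C₀ * Real.exp (k₀ * ‖ξ‖ ^ (1 / s))) ∧
        ∀ x y, ω (x + y) ≤ C₁ * v x * ω y

/-- The Fourier–Lebesgue seminorm `( ∫_Γ (|f̂| ω)^q )^{1/q}` (ess-sup when `q = ∞`). -/
def FLSemi (ω : EuclideanSpace ℝ (Fin d) → ℝ) (q : ℝ≥0∞)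
    (f : EuclideanSpace ℝ (Fin d) → ℂ) (Γ : Set (EuclideanSpace ℝ (Fin d))) : ℝ≥0∞ :=
  eLpNorm (fun ξ => ‖FT f ξ‖ * ω ξ) q (volume.restrict Γ)

/-- The Fourier–Lebesgue wave-front set `WF_{FL^q_ω} f`. -/
def WF_FL (s : ℝ) (q : ℝ≥0∞) (ω : EuclideanSpace ℝ (Fin d) → ℝ)
    (f : EuclideanSpace ℝ (Fin d) → ℂ) :
    Set (EuclideanSpace ℝ (Fin d) × EuclideanSpace ℝ (Fin d)) :=
  {z | z.2 ≠ 0 ∧ ∀ φ : EuclideanSpace ℝ (Fin d) → ℂ, IsSCutoff s φ → φ z.1 ≠ 0 →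
    ∀ Γ : Set (EuclideanSpace ℝ (Fin d)), IsOpen Γ → IsCone Γ → z.2 ∈ Γ →
      FLSemi ω q (fun x => φ x * f x) Γ = ∞}

/-- The `s`-wave-front set `WF_s f`. -/
def WFs (s : ℝ) (f : EuclideanSpace ℝ (Fin d) → ℂ) :
    Set (EuclideanSpace ℝ (Fin d) × EuclideanSpace ℝ (Fin d)) :=
  {z | z.2 ≠ 0 ∧ ¬ ∃ φ : EuclideanSpace ℝ (Fin d) → ℂ, IsSCutoff s φ ∧
    (∃ U : Set (EuclideanSpace ℝ (Fin d)), IsOpen U ∧ z.1 ∈ U ∧ ∀ x ∈ U, φ x = 1) ∧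
    ∃ Γ : Set (EuclideanSpace ℝ (Fin d)), IsOpen Γ ∧ IsCone Γ ∧ z.2 ∈ Γ ∧
      ∃ C k : ℝ, 0 < C ∧ 0 < k ∧
        ∀ ξ ∈ Γ, ‖FT (fun x => φ x * f x) ξ‖ ≤ C * Real.exp (-k * ‖ξ‖ ^ (1 / s))}

/-- The mixed modulation-space seminorm
`( ∫_Γ ( ∫ |V_g F(x,ξ)|^p dx )^{q/p} ω(ξ)^q dξ )^{1/q}` with the usual
ess-sup interpretations for `p = ∞` or `q = ∞`. -/
def ModSemi (g F : EuclideanSpace ℝ (Fin d) → ℂ) (ω : EuclideanSpace ℝ (Fin d) → ℝ)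
    (p q : ℝ≥0∞) (Γ : Set (EuclideanSpace ℝ (Fin d))) : ℝ≥0∞ :=
  if q = ∞ then
    essSup (fun ξ => eLpNorm (fun x => STFT g F x ξ) p volume * ENNReal.ofReal (ω ξ))
      (volume.restrict Γ)
  else
    (∫⁻ ξ in Γ, (eLpNorm (fun x => STFT g F x ξ) p volume * ENNReal.ofReal (ω ξ)) ^ q.toReal) ^
      (1 / q.toReal)

/-- The modulation wave-front set `WF_{M^{p,q}_ω} f`, with window `g`. -/
def WF_M (s : ℝ) (p q : ℝ≥0∞) (ω : EuclideanSpace ℝ (Fin d) → ℝ)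
    (g f : EuclideanSpace ℝ (Fin d) → ℂ) :
    Set (EuclideanSpace ℝ (Fin d) × EuclideanSpace ℝ (Fin d)) :=
  {z | z.2 ≠ 0 ∧ ∀ φ : EuclideanSpace ℝ (Fin d) → ℂ, IsSCutoff s φ → φ z.1 ≠ 0 →
    ∀ Γ : Set (EuclideanSpace ℝ (Fin d)), IsOpen Γ → IsCone Γ → z.2 ∈ Γ →
      ModSemi g (fun x => φ x * f x) ω p q Γ = ∞}

/-- Reinterpret a plain vector as a point of Euclidean space. -/
def toE (x : Fin d → ℝ) : EuclideanSpace ℝ (Fin d) :=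
  (EuclideanSpace.equiv (Fin d) ℝ).symm x

/-- The point `A k` of the lattice `A(ℤ^d)`. -/
def latPt (A : Matrix (Fin d) (Fin d) ℝ) (k : Fin d → ℤ) : EuclideanSpace ℝ (Fin d) :=
  toE (A.mulVec fun i => (k i : ℝ))

/-- The point `c (Aᵀ)⁻¹ k` of the dual lattice `c (Aᵀ)⁻¹(ℤ^d)`. -/
def dualLatPt (A : Matrix (Fin d) (Fin d) ℝ) (c : ℝ) (k : Fin d → ℤ) :
    EuclideanSpace ℝ (Fin d) :=
  toE (c • (A.transpose⁻¹.mulVec fun i => (k i : ℝ)))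

/-- The parallelepiped `x₁ + A([0,1]^d)`. -/
def lattPara (A : Matrix (Fin d) (Fin d) ℝ) (x₁ : EuclideanSpace ℝ (Fin d)) :
    Set (EuclideanSpace ℝ (Fin d)) :=
  (fun t : Fin d → ℝ => x₁ + toE (A.mulVec t)) '' (Set.univ.pi fun _ => Set.Icc 0 1)

/-- The adjoint short-time Fourier transform `V*_φ F`. -/
def VStar (φ : EuclideanSpace ℝ (Fin d) → ℂ)
    (F : EuclideanSpace ℝ (Fin d) × EuclideanSpace ℝ (Fin d) → ℂ)
    (t : EuclideanSpace ℝ (Fin d)) : ℂ :=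
  ((2 * Real.pi) ^ (-(d : ℝ) / 2) : ℝ) *
    ∫ z : EuclideanSpace ℝ (Fin d) × EuclideanSpace ℝ (Fin d),
      F z * Complex.exp ((⟪z.2, t⟫ : ℝ) * Complex.I) * φ (t - z.1)

/-!
Up to scaling, `FT (φ u)` is the convolution `∫ 𝓕 φ (η) 𝓕 u (ξ - η) dη`. Fix `ξ ∈ Γ₀` and a small
`θ > 0`. If `‖η‖ < θ ‖ξ‖`, then `ξ - η` lies in `Γ` and has norm at least `θ ‖ξ‖`, so `𝓕 u (ξ - η)`
is small; otherwise `‖η‖ ≥ θ ‖ξ‖`, and half of the exponential rate of `𝓕 φ (η)` suffices, since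
`𝓕 u` is bounded. In both cases the other half of the rate makes the bound integrable in `η`.
-/

section Cone

variable {E : Type*} [NormedAddCommGroup E] [NormedSpace ℝ E] [ProperSpace E]

lemma exists_pos_forall_sub_mem_of_closure_diff_subset {S T : Set E}
    (hS : ∀ ξ ∈ S, ∀ r : ℝ, 0 < r → r • ξ ∈ S) (hT : ∀ ξ ∈ T, ∀ r : ℝ, 0 < r → r • ξ ∈ T)
    (hTo : IsOpen T) (hST : closure S \ {0} ⊆ T) :
    ∃ δ : ℝ, 0 < δ ∧ ∀ ξ ∈ S, ∀ η, ‖η‖ < δ * ‖ξ‖ → ξ - η ∈ T := by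
  have hK : IsCompact (closure S ∩ Metric.sphere 0 1) :=
    (isCompact_sphere _ _).inter_left isClosed_closure
  have hKT : closure S ∩ Metric.sphere 0 1 ⊆ T := fun x ⟨hxS, hx⟩ =>
    hST ⟨hxS, ne_zero_of_mem_unit_sphere ⟨x, hx⟩⟩
  obtain ⟨δ, hδ, hδT⟩ := hK.exists_thickening_subset_open hTo hKT
  refine ⟨δ, hδ, fun ξ hξ η hη => ?_⟩
  have hξ_pos : 0 < ‖ξ‖ := pos_of_mul_pos_right ((norm_nonneg η).trans_lt hη) hδ.le
  have hunit : ‖ξ‖⁻¹ • ξ ∈ closure S ∩ Metric.sphere 0 1 :=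
    ⟨subset_closure (hS ξ hξ _ (inv_pos.2 hξ_pos)), by simp [norm_smul, hξ_pos.ne']⟩
  have hdist : dist (‖ξ‖⁻¹ • (ξ - η)) (‖ξ‖⁻¹ • ξ) < δ := by
    rwa [dist_eq_norm, ← smul_sub, sub_sub_cancel_left, norm_smul, norm_neg, norm_inv, norm_norm,
      inv_mul_lt_iff₀ hξ_pos, mul_comm]
  have hmem : ‖ξ‖⁻¹ • (ξ - η) ∈ T := hδT (Metric.mem_thickening_iff.2 ⟨_, hunit, hdist⟩)
  simpa [smul_smul, hξ_pos.ne'] using hT _ hmem ‖ξ‖ hξ_pos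

end Cone

section Decay

variable {E F G : Type*} [NormedAddCommGroup E] [NormedAddCommGroup F] [NormedAddCommGroup G]

/-- Decay on `S` like `exp (-k ‖ξ‖ ^ t)` for some rate `k > 0`; the regularity measured by the
`s`-wave-front set is this decay of the Fourier transform for `t = 1 / s`. -/
def HasExpDecayOn (t : ℝ) (f : E → F) (S : Set E) : Prop :=
  ∃ C k : ℝ, 0 < C ∧ 0 < k ∧ ∀ ξ ∈ S, ‖f ξ‖ ≤ C * Real.exp (-k * ‖ξ‖ ^ t)

variable {t : ℝ} {f : E → F} {g : E → G} {S T : Set E}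

lemma HasExpDecayOn.const_smul {𝕜 : Type*} [NormedField 𝕜] [NormedSpace 𝕜 F]
    (hf : HasExpDecayOn t f S) (c : 𝕜) : HasExpDecayOn t (fun ξ => c • f ξ) S := by
  obtain ⟨C, k, hC, hk, hf⟩ := hf
  refine ⟨(‖c‖ + 1) * C, k, by positivity, hk, fun ξ hξ => ?_⟩
  rw [norm_smul, mul_assoc]
  gcongr
  · linarith
  · exact hf ξ hξ

lemma HasExpDecayOn.comp_smul [NormedSpace ℝ E] (hf : HasExpDecayOn t f S) {r : ℝ} (hr : r ≠ 0)
    (hS : ∀ ξ ∈ S, r • ξ ∈ S) : HasExpDecayOn t (fun ξ => f (r • ξ)) S := by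
  obtain ⟨C, k, hC, hk, hf⟩ := hf
  refine ⟨C, k * |r| ^ t, hC, by positivity, fun ξ hξ => (hf _ (hS ξ hξ)).trans_eq ?_⟩
  rw [norm_smul, Real.norm_eq_abs, Real.mul_rpow (abs_nonneg r) (norm_nonneg ξ), neg_mul, neg_mul,
    mul_assoc]

lemma exp_neg_mul_rpow_le_of_mul_le {k θ x y : ℝ} (hk : 0 ≤ k) (ht : 0 ≤ t) (hθ : 0 ≤ θ)
    (hx : 0 ≤ x) (hxy : θ * x ≤ y) :
    Real.exp (-k * y ^ t) ≤ Real.exp (-(k * θ ^ t) * x ^ t) := by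
  have hpow : θ ^ t * x ^ t ≤ y ^ t := by
    rw [← Real.mul_rpow hθ hx]
    gcongr
  rw [Real.exp_le_exp, neg_mul, neg_mul, neg_le_neg_iff, mul_assoc]
  gcongr

lemma HasExpDecayOn.exists_exp_mul_norm_sub_le (hg : HasExpDecayOn t g T) (ht : 0 ≤ t) {B : ℝ}
    (hB : ∀ ξ, ‖g ξ‖ ≤ B) {δ : ℝ} (hδ : 0 < δ)
    (hST : ∀ ξ ∈ S, ∀ η, ‖η‖ < δ * ‖ξ‖ → ξ - η ∈ T) {a : ℝ} (ha : 0 < a) :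
    ∃ C k : ℝ, 0 < C ∧ 0 < k ∧ ∀ ξ ∈ S, ∀ η,
      Real.exp (-a * ‖η‖ ^ t) * ‖g (ξ - η)‖ ≤ C * Real.exp (-k * ‖ξ‖ ^ t) := by
  obtain ⟨M, b, hM, hb, hg⟩ := hg
  -- `θ ≤ 1 / 2` ensures that `‖η‖ < θ ‖ξ‖` implies `θ ‖ξ‖ ≤ ‖ξ - η‖`.
  set θ := min δ (1 / 2)
  have hθ : 0 < θ := by positivity
  set k := min a b
  have hk : 0 < k := by positivity
  refine ⟨max B M, k * θ ^ t, by positivity, by positivity, fun ξ hξ η => ?_⟩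
  have hexp {c : ℝ} {ζ : E} (hc : k ≤ c) (hζ : θ * ‖ξ‖ ≤ ‖ζ‖) :
      Real.exp (-c * ‖ζ‖ ^ t) ≤ Real.exp (-(k * θ ^ t) * ‖ξ‖ ^ t) :=
    (by gcongr : Real.exp (-c * ‖ζ‖ ^ t) ≤ Real.exp (-k * ‖ζ‖ ^ t)).trans <|
      exp_neg_mul_rpow_le_of_mul_le hk.le ht hθ.le (norm_nonneg ξ) hζ
  rw [mul_comm]
  rcases lt_or_ge ‖η‖ (θ * ‖ξ‖) with hη | hη
  · have hmem : ξ - η ∈ T := hST ξ hξ η (hη.trans_le (by gcongr; exact min_le_left _ _))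
    have hfar : θ * ‖ξ‖ ≤ ‖ξ - η‖ := by
      have hθ_half : θ * ‖ξ‖ ≤ 1 / 2 * ‖ξ‖ := by gcongr; exact min_le_right _ _
      linarith [norm_sub_norm_le ξ η]
    have hexp_le_one : Real.exp (-a * ‖η‖ ^ t) ≤ 1 :=
      Real.exp_le_one_iff.2 (mul_nonpos_of_nonpos_of_nonneg (by linarith) (by positivity))
    calc ‖g (ξ - η)‖ * Real.exp (-a * ‖η‖ ^ t)
        ≤ ‖g (ξ - η)‖ := mul_le_of_le_one_right (norm_nonneg _) hexp_le_one
      _ ≤ M * Real.exp (-b * ‖ξ - η‖ ^ t) := hg _ hmem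
      _ ≤ max B M * Real.exp (-(k * θ ^ t) * ‖ξ‖ ^ t) := by
          gcongr ?_ * ?_
          · exact le_max_right _ _
          · exact hexp (min_le_right _ _) hfar
  · gcongr ?_ * ?_
    · exact (hB _).trans (le_max_left _ _)
    · exact hexp (min_le_left _ _) hη

section Integral

variable [NormedSpace ℝ E] [FiniteDimensional ℝ E] [MeasurableSpace E] [BorelSpace E]
  {μ : Measure E} [μ.IsAddHaarMeasure]

lemma integrable_exp_neg_norm_rpow (ht : 0 < t) :
    Integrable (fun x : E => Real.exp (-‖x‖ ^ t)) μ := by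
  refine .of_integral_ne_zero fun hzero => ?_
  have hball := measure_unitBall_eq_integral_div_gamma μ ht
  rw [hzero, zero_div, ENNReal.ofReal_zero] at hball
  exact (Metric.measure_ball_pos μ 0 one_pos).ne' hball

lemma integrable_exp_neg_mul_norm_rpow (ht : 0 < t) {a : ℝ} (ha : 0 < a) :
    Integrable (fun x : E => Real.exp (-a * ‖x‖ ^ t)) μ := by
  have hscale := (integrable_exp_neg_norm_rpow (μ := μ) ht).comp_smul
    (Real.rpow_pos_of_pos ha t⁻¹).ne'
  refine hscale.congr (.of_forall fun x => ?_)
  have hpow : ‖a ^ t⁻¹ • x‖ ^ t = a * ‖x‖ ^ t := by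
    rw [norm_smul, Real.norm_of_nonneg (by positivity),
      Real.mul_rpow (by positivity) (by positivity), Real.rpow_inv_rpow ha.le ht.ne']
  simp only [hpow, neg_mul]

lemma HasExpDecayOn.integrable (hf : HasExpDecayOn t f univ) (ht : 0 < t)
    (hfm : AEStronglyMeasurable f μ) : Integrable f μ := by
  obtain ⟨C, k, -, hk, hf⟩ := hf
  exact ((integrable_exp_neg_mul_norm_rpow ht hk).const_mul C).mono' hfm
    (.of_forall fun ξ => hf ξ (mem_univ ξ))

open scoped Convolution in
lemma HasExpDecayOn.convolution {𝕜 H : Type*} [NontriviallyNormedField 𝕜] [NormedSpace 𝕜 F]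
    [NormedSpace 𝕜 G] [NormedAddCommGroup H] [NormedSpace 𝕜 H] [NormedSpace ℝ H]
    (hf : HasExpDecayOn t f univ) (hg : HasExpDecayOn t g T) (L : F →L[𝕜] G →L[𝕜] H)
    (ht : 0 < t) {B : ℝ} (hB : ∀ ξ, ‖g ξ‖ ≤ B) {δ : ℝ} (hδ : 0 < δ)
    (hST : ∀ ξ ∈ S, ∀ η, ‖η‖ < δ * ‖ξ‖ → ξ - η ∈ T) :
    HasExpDecayOn t (f ⋆[L, μ] g) S := by
  obtain ⟨A, a, hA, ha, hf⟩ := hf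
  obtain ⟨M, k, hM, hk, hg⟩ := hg.exists_exp_mul_norm_sub_le ht.le hB hδ hST (half_pos ha)
  set w : E → ℝ := fun η => Real.exp (-(a / 2) * ‖η‖ ^ t)
  have hw : Integrable w μ := integrable_exp_neg_mul_norm_rpow ht (half_pos ha)
  have hf_split (η : E) : ‖f η‖ ≤ A * (w η * w η) := by
    refine (hf η (mem_univ η)).trans_eq ?_
    rw [← Real.exp_add, ← add_mul, ← neg_add, add_halves]
  have hpoint (ξ : E) (hξ : ξ ∈ S) (η : E) :
      ‖L (f η) (g (ξ - η))‖ ≤ ‖L‖ * A * M * Real.exp (-k * ‖ξ‖ ^ t) * w η :=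
    calc ‖L (f η) (g (ξ - η))‖
        ≤ ‖L‖ * ‖f η‖ * ‖g (ξ - η)‖ := L.le_opNorm₂ _ _
      _ ≤ ‖L‖ * (A * (w η * w η)) * ‖g (ξ - η)‖ := by gcongr; exact hf_split η
      _ = ‖L‖ * A * (w η * ‖g (ξ - η)‖) * w η := by ring
      _ ≤ ‖L‖ * A * (M * Real.exp (-k * ‖ξ‖ ^ t)) * w η := by
          gcongr ‖L‖ * A * ?_ * w η
          exact hg ξ hξ η
      _ = _ := by ring
  refine ⟨‖L‖ * A * M * (∫ η, w η ∂μ) + 1, k, by positivity, hk, fun ξ hξ => ?_⟩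
  calc ‖(f ⋆[L, μ] g) ξ‖
      ≤ ∫ η, ‖L‖ * A * M * Real.exp (-k * ‖ξ‖ ^ t) * w η ∂μ :=
        norm_integral_le_of_norm_le (hw.const_mul _) (.of_forall (hpoint ξ hξ))
    _ = ‖L‖ * A * M * (∫ η, w η ∂μ) * Real.exp (-k * ‖ξ‖ ^ t) := by
        rw [integral_const_mul]
        ring
    _ ≤ _ := by gcongr; exact le_add_of_nonneg_right zero_le_one

end Integral

end Decay

section Fourier

open scoped FourierTransform Convolution

variable {V F : Type*} [NormedAddCommGroup V] [InnerProductSpace ℝ V] [FiniteDimensional ℝ V]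
  [MeasurableSpace V] [BorelSpace V] [NormedAddCommGroup F] [NormedSpace ℂ F]

lemma fourier_fourierChar_smul (g : V → F) (ξ η : V) :
    𝓕 (fun x => 𝐞 (-⟪x, ξ⟫) • g x) η = 𝓕 g (ξ + η) := by
  simp only [Real.fourier_eq, smul_smul, ← AddChar.map_add_eq_mul, ← neg_add, inner_add_right,
    add_comm]

lemma integral_fourier_smul_eq [CompleteSpace F] {f : V → ℂ} {g : V → F} (hf : Integrable f)
    (hg : Integrable g) : ∫ ξ, 𝓕 f ξ • g ξ = ∫ x, f x • 𝓕 g x := by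
  simpa only [flip_innerₗ] using! VectorFourier.integral_fourierIntegral_smul_eq_flip
    (L := innerₗ V) Real.continuous_fourierChar continuous_inner hf hg

lemma fourier_smul_eq_convolution [CompleteSpace F] {f : V → ℂ} {g : V → F}
    (hfc : Continuous f) (hf : Integrable f) (hf' : Integrable (𝓕 f)) (hg : Integrable g) :
    𝓕 (fun x => f x • g x) = 𝓕 f ⋆[ContinuousLinearMap.lsmul ℂ ℂ] 𝓕 g := by
  ext ξ
  set gξ : V → F := fun x => 𝐞 (-⟪x, ξ⟫) • g x
  have hgξ : Integrable gξ := (Real.fourierIntegral_convergent_iff ξ).2 hg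
  have hinv : 𝓕 (fun η => 𝓕 f (-η)) = f := by
    rw [← Real.fourierInv_eq_fourier_comp_neg, hfc.fourierInv_fourier_eq hf hf']
  calc 𝓕 (fun x => f x • g x) ξ
      = ∫ x, 𝓕 (fun η => 𝓕 f (-η)) x • gξ x := by
        rw [hinv, Real.fourier_eq]
        exact integral_congr_ae (.of_forall fun x => smul_comm _ _ _)
    _ = ∫ η, 𝓕 f (-η) • 𝓕 g (ξ + η) := by
        rw [integral_fourier_smul_eq hf'.comp_neg hgξ]
        simp only [gξ, fourier_fourierChar_smul]
    _ = ∫ η, 𝓕 f η • 𝓕 g (ξ - η) := by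
        rw [← integral_neg_eq_self]
        simp only [neg_neg, sub_eq_add_neg]
    _ = _ := rfl

lemma HasExpDecayOn.fourier_smul [CompleteSpace F] {t : ℝ} (ht : 0 < t) {f : V → ℂ}
    {g : V → F} (hfc : Continuous f) (hf : Integrable f) (hg : Integrable g)
    (hfdec : HasExpDecayOn t (𝓕 f) univ) {S T : Set V} (hgdec : HasExpDecayOn t (𝓕 g) T)
    {δ : ℝ} (hδ : 0 < δ) (hST : ∀ ξ ∈ S, ∀ η, ‖η‖ < δ * ‖ξ‖ → ξ - η ∈ T) :
    HasExpDecayOn t (𝓕 fun x => f x • g x) S := by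
  have hf_cont : Continuous (𝓕 f) :=
    VectorFourier.fourierIntegral_continuous Real.continuous_fourierChar continuous_inner hf
  have hf' : Integrable (𝓕 f) := hfdec.integrable ht hf_cont.aestronglyMeasurable
  rw [fourier_smul_eq_convolution hfc hf hf' hg]
  exact hfdec.convolution hgdec _ ht
    (fun ξ => VectorFourier.norm_fourierIntegral_le_integral_norm _ _ _ g ξ) hδ hST

lemma FT_eq_smul_fourier_comp_smul (f : EuclideanSpace ℝ (Fin d) → ℂ) :
    FT f = fun ξ => ((2 * Real.pi) ^ (-(d : ℝ) / 2) : ℝ) • 𝓕 f ((2 * Real.pi)⁻¹ • ξ) := by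
  ext ξ
  rw [FT, Real.fourier_eq', Complex.real_smul]
  congr 2 with x
  have hphase : -2 * Real.pi * ⟪x, (2 * Real.pi)⁻¹ • ξ⟫ = -⟪x, ξ⟫ := by
    rw [inner_smul_right]
    field_simp
  rw [hphase, smul_eq_mul, mul_comm, Complex.ofReal_neg]

lemma hasExpDecayOn_FT_iff {t : ℝ} {f : EuclideanSpace ℝ (Fin d) → ℂ}
    {S : Set (EuclideanSpace ℝ (Fin d))} (hS : ∀ ξ ∈ S, ∀ r : ℝ, 0 < r → r • ξ ∈ S) :
    HasExpDecayOn t (FT f) S ↔ HasExpDecayOn t (𝓕 f) S := by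
  have hpi : 0 < 2 * Real.pi := Real.two_pi_pos
  set c : ℝ := (2 * Real.pi) ^ (-(d : ℝ) / 2)
  have hc : c ≠ 0 := by positivity
  rw [show FT f = fun ξ => c • 𝓕 f ((2 * Real.pi)⁻¹ • ξ) from FT_eq_smul_fourier_comp_smul f]
  refine ⟨fun h => ?_, fun h => ?_⟩
  · have h' := (h.comp_smul hpi.ne' fun ξ hξ => hS ξ hξ _ hpi).const_smul c⁻¹
    simpa only [smul_smul, inv_mul_cancel₀ hc, inv_mul_cancel₀ hpi.ne', one_smul] using h'
  · exact (h.comp_smul (inv_ne_zero hpi.ne') fun ξ hξ => hS ξ hξ _ (inv_pos.2 hpi)).const_smul c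

end Fourier

theorem stmt7_general {d : ℕ} {s : ℝ} (hs : 0 < s) {u φ : EuclideanSpace ℝ (Fin d) → ℂ}
    (hu : Integrable u) (hφc : Continuous φ) (hφ : Integrable φ)
    {Γ₀ Γ : Set (EuclideanSpace ℝ (Fin d))} (h₀c : IsCone Γ₀) (hΓo : IsOpen Γ) (hΓc : IsCone Γ)
    (hsub : closure Γ₀ \ {0} ⊆ Γ) (hudec : HasExpDecayOn (1 / s) (FT u) Γ)
    (hφdec : HasExpDecayOn (1 / s) (FT φ) univ) :
    HasExpDecayOn (1 / s) (FT fun x => φ x * u x) Γ₀ := by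
  rw [hasExpDecayOn_FT_iff h₀c.2]
  rw [hasExpDecayOn_FT_iff hΓc.2] at hudec
  rw [hasExpDecayOn_FT_iff fun _ _ _ _ => mem_univ _] at hφdec
  obtain ⟨δ, hδ, hδΓ⟩ :=
    exists_pos_forall_sub_mem_of_closure_diff_subset h₀c.2 hΓc.2 hΓo hsub
  exact HasExpDecayOn.fourier_smul (one_div_pos.2 hs) hφc hφ hu hφdec hudec hδ hδΓ

theorem stmt7 {d : ℕ} (s : ℝ) (hs : 1 < s)
    (u : EuclideanSpace ℝ (Fin d) → ℂ) (hu : Integrable u) (huc : HasCompactSupport u)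
    (Γ₀ Γ : Set (EuclideanSpace ℝ (Fin d)))
    (h₀o : IsOpen Γ₀) (h₀c : IsCone Γ₀) (hΓo : IsOpen Γ) (hΓc : IsCone Γ)
    (hsub : closure Γ₀ \ {0} ⊆ Γ)
    (C k : ℝ) (hC : 0 < C) (hk : 0 < k)
    (hdec : ∀ ξ ∈ Γ, ‖FT u ξ‖ ≤ C * Real.exp (-k * ‖ξ‖ ^ (1 / s))) :
    ∀ φ : EuclideanSpace ℝ (Fin d) → ℂ, IsSCutoff s φ →
      ∃ C' k' : ℝ, 0 < C' ∧ 0 < k' ∧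
        ∀ ξ ∈ Γ₀, ‖FT (fun x => φ x * u x) ξ‖ ≤ C' * Real.exp (-k' * ‖ξ‖ ^ (1 / s)) := by
  rintro φ ⟨hφ, hφc, hφdec⟩
  obtain ⟨A, hA, hφA⟩ := hφdec 1 one_pos
  exact stmt7_general (one_pos.trans hs) hu hφ.continuous
    (hφ.continuous.integrable_of_hasCompactSupport hφc) h₀c hΓo hΓc hsub ⟨C, k, hC, hk, hdec⟩
    ⟨A, 1, hA, one_pos, fun ξ _ => hφA ξ⟩

end Paper
end
end

section
/- Let s > 1, p, q ∈ [1,∞], let ω be an s-admissible weight on ℝ^d, let g be a nonzero s-cutoff, and let f ∈ L¹(ℝ^d) have compact support. Then WF_{M^{p,q}_ω}(f) = WF_{FL^q_ω}(f); in particular WF_{M^{p,q}_ω}(f) does not depend on p nor on the window g. -/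
open MeasureTheory Complex Set
open scoped ENNReal RealInnerProductSpace NNReal

noncomputable section

namespace Paper

variable {d : ℕ}

/-!
Write `F = φ f`. Multiplying by a translate of the window convolves `F̂` with its Fourier transform,
so `|V_g F(x, ξ)| ≤ (2π)^{-d/2} (|ĝ(-·)| * |F̂|)(ξ)` uniformly in `x`; as `V_g F(·, ξ)` lives on a
fixed compact set, the same bound, up to a constant, holds for its `L^p` norm. For `ξ` in a
sufficiently small subcone `Γ'` of `Γ`, frequencies `ξ - η` with `|η| ≤ c |ξ|` stay in `Γ`, and
moderateness of `ω` moves the weight from `ξ` to `ξ - η`; when `|η| > c |ξ|`, the decay of `ĝ` beats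
the growth of `ω` and `F̂` is merely bounded. Young's inequality then bounds the modulation seminorm
over `Γ'` by the Fourier–Lebesgue seminorm over `Γ`.

Conversely `∫ χ(x) V_g F(x, ξ) dx` is the Fourier transform of `F · (χ * ḡ)`, which Hölder's
inequality in `x` bounds by `‖V_g F(·, ξ)‖_{L^p}`. So `φ · (χ * ḡ)` is a cutoff with finite
Fourier–Lebesgue seminorm, and for `χ = g(x₀ - ·)` it does not vanish at `x₀`, since
`(χ * ḡ)(x₀) = ‖g‖²_{L²}`.
-/

open scoped Convolution FourierTransform Pointwise

section StretchedExponential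

lemma norm_rpow_le_norm_sub_rpow_add {E : Type*} [SeminormedAddCommGroup E] {r : ℝ} (hr₀ : 0 ≤ r)
    (hr₁ : r ≤ 1) (x y : E) : ‖x‖ ^ r ≤ ‖x - y‖ ^ r + ‖y‖ ^ r :=
  (Real.rpow_le_rpow (norm_nonneg _) (norm_le_norm_sub_add x y) hr₀).trans
    (Real.rpow_add_le_add_rpow (norm_nonneg _) (norm_nonneg _) hr₀ hr₁)

lemma exp_neg_norm_rpow_mul_le {E : Type*} [SeminormedAddCommGroup E] {r N : ℝ} (hr₀ : 0 ≤ r)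
    (hr₁ : r ≤ 1) (hN : 0 ≤ N) (x y : E) :
    Real.exp (-(N + 1) * ‖y‖ ^ r) * Real.exp (-N * ‖x - y‖ ^ r) ≤
      Real.exp (-N * ‖x‖ ^ r) * Real.exp (-1 * ‖y‖ ^ r) := by
  rw [← Real.exp_add, ← Real.exp_add, Real.exp_le_exp]
  linarith [mul_le_mul_of_nonneg_left (norm_rpow_le_norm_sub_rpow_add hr₀ hr₁ x y) hN]

lemma integrable_exp_neg_mul_norm_rpow_s10 {E : Type*} [NormedAddCommGroup E] [NormedSpace ℝ E]
    [FiniteDimensional ℝ E] [MeasurableSpace E] [BorelSpace E] (μ : Measure E) [μ.IsAddHaarMeasure]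
    {r k : ℝ} (hr : 0 < r) (hk : 0 < k) :
    Integrable (fun x : E => Real.exp (-k * ‖x‖ ^ r)) μ := by
  rcases subsingleton_or_nontrivial E with _ | _
  · exact .of_finite
  refine (integrable_fun_norm_addHaar μ (f := fun t : ℝ => Real.exp (-k * t ^ r))).2 ?_
  refine (integrableOn_rpow_mul_exp_neg_mul_rpow
    (neg_one_lt_zero.trans_le (Nat.cast_nonneg (Module.finrank ℝ E - 1))) hr hk).congr_fun
    (fun t _ => ?_) measurableSet_Ioi
  simp only [Real.rpow_natCast, smul_eq_mul]

lemma eLpNorm_lt_top_of_le_one {α : Type*} [MeasurableSpace α] {μ : Measure α} {f : α → ℝ≥0∞}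
    (hf : ∀ x, f x ≤ 1) (hf_int : ∫⁻ x, f x ∂μ < ∞) {q : ℝ≥0∞} (hq : 1 ≤ q) :
    eLpNorm f q μ < ∞ := by
  rcases eq_or_ne q ∞ with rfl | hq_top
  · exact (eLpNormEssSup_lt_top_of_ae_enorm_bound (C := 1) (.of_forall hf))
  rw [eLpNorm_lt_top_iff_lintegral_rpow_enorm_lt_top (one_pos.trans_le hq).ne' hq_top]
  refine (lintegral_mono fun x => ?_).trans_lt hf_int
  exact ENNReal.rpow_le_self_of_le_one (hf x)
    (by simpa only [ENNReal.toReal_one] using ENNReal.toReal_mono hq_top hq)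

/-- The stretched exponential `exp (-|ξ|^{1/s})`, with values in `ℝ≥0∞` so that it can be convolved
with Fourier–Lebesgue integrands of unknown finiteness. -/
def stretchedExp (s : ℝ) (ξ : EuclideanSpace ℝ (Fin d)) : ℝ≥0∞ :=
  ENNReal.ofReal (Real.exp (-‖ξ‖ ^ (1 / s)))

variable {s : ℝ}

lemma measurable_stretchedExp : Measurable (stretchedExp s : EuclideanSpace ℝ (Fin d) → ℝ≥0∞) := by
  unfold stretchedExp
  fun_prop

lemma lintegral_stretchedExp_lt_top (hs : 0 < s) :
    ∫⁻ ξ : EuclideanSpace ℝ (Fin d), stretchedExp s ξ < ∞ := by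
  simpa only [neg_one_mul, stretchedExp] using (integrable_exp_neg_mul_norm_rpow_s10
    (volume : Measure (EuclideanSpace ℝ (Fin d))) (one_div_pos.2 hs) one_pos).lintegral_lt_top

lemma eLpNorm_stretchedExp_lt_top (hs : 0 < s) {q : ℝ≥0∞} (hq : 1 ≤ q) :
    eLpNorm (stretchedExp s : EuclideanSpace ℝ (Fin d) → ℝ≥0∞) q volume < ∞ :=
  eLpNorm_lt_top_of_le_one (fun ξ => ENNReal.ofReal_le_one.2
    (Real.exp_le_one_iff.2 (neg_nonpos.2 (by positivity)))) (lintegral_stretchedExp_lt_top hs) hq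

end StretchedExponential

section Young

variable {G : Type*} [MeasurableSpace G] {μ : Measure G} {a b : G → ℝ≥0∞}

lemma lconvolution_rpow_le [AddGroup G] [MeasurableAdd₂ G] [MeasurableNeg G] {r : ℝ} (hr : 1 ≤ r)
    (hb : Measurable b) (ha : Measurable a) (x : G) :
    (b ⋆ₗ[μ] a) x ^ r ≤ (∫⁻ y, b y ∂μ) ^ (r - 1) * (b ⋆ₗ[μ] fun y => a y ^ r) x := by
  have hr₀ : 0 < r := one_pos.trans_le hr
  have ha_x : Measurable fun y => a (-y + x) := by fun_prop
  -- Jensen's inequality for the measure `b ∂μ`, whose total mass is `∫⁻ b ∂μ`.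
  have jensen := eLpNorm'_le_eLpNorm'_mul_rpow_measure_univ (μ := μ.withDensity b) one_pos hr
    (f := fun y => a (-y + x)) ha_x.aestronglyMeasurable
  simp only [eLpNorm', enorm_eq_self, ENNReal.rpow_one, div_one, withDensity_apply _ .univ,
    Measure.restrict_univ] at jensen
  rw [lintegral_withDensity_eq_lintegral_mul _ hb ha_x,
    lintegral_withDensity_eq_lintegral_mul _ hb (ha_x.pow_const r)] at jensen
  calc (b ⋆ₗ[μ] a) x ^ r
      ≤ ((b ⋆ₗ[μ] fun y => a y ^ r) x ^ (1 / r) * (∫⁻ y, b y ∂μ) ^ (1 - 1 / r)) ^ r := by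
        gcongr
        exact jensen
    _ = (∫⁻ y, b y ∂μ) ^ (r - 1) * (b ⋆ₗ[μ] fun y => a y ^ r) x := by
        rw [ENNReal.mul_rpow_of_nonneg _ _ hr₀.le, ← ENNReal.rpow_mul, ← ENNReal.rpow_mul,
          one_div_mul_cancel hr₀.ne', ENNReal.rpow_one, mul_comm, sub_mul, one_mul,
          one_div_mul_cancel hr₀.ne']

lemma lintegral_lconvolution [AddGroup G] [MeasurableAdd₂ G] [MeasurableNeg G] [SFinite μ]
    [μ.IsAddLeftInvariant] (hb : Measurable b) (ha : Measurable a) :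
    ∫⁻ x, (b ⋆ₗ[μ] a) x ∂μ = (∫⁻ y, b y ∂μ) * ∫⁻ y, a y ∂μ := by
  simp only [lconvolution_def]
  rw [lintegral_lintegral_swap (by fun_prop)]
  have translate (y : G) : ∫⁻ x, b y * a (-y + x) ∂μ = b y * ∫⁻ x, a x ∂μ := by
    rw [lintegral_const_mul _ (by fun_prop), lintegral_add_left_eq_self]
  simp only [translate]
  exact lintegral_mul_const _ hb

lemma eLpNorm_top_lconvolution_le [AddCommGroup G] [MeasurableAdd₂ G] [MeasurableNeg G]
    [SFinite μ] [μ.IsAddLeftInvariant] (hb : Measurable b) :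
    eLpNorm (b ⋆ₗ[μ] a) ∞ μ ≤ (∫⁻ y, b y ∂μ) * eLpNorm a ∞ μ := by
  simp only [eLpNorm_exponent_top, eLpNormEssSup, enorm_eq_self]
  refine essSup_le_of_ae_le _ (.of_forall fun x => ?_)
  have ha_bound : ∀ᵐ y ∂μ, a (-y + x) ≤ essSup a μ := by
    simpa only [neg_add_eq_sub] using
      (quasiMeasurePreserving_sub_left μ x).ae (ENNReal.ae_le_essSup a)
  calc (b ⋆ₗ[μ] a) x ≤ ∫⁻ y, b y * essSup a μ ∂μ :=
        lintegral_mono_ae (ha_bound.mono fun y hy => by gcongr)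
    _ ≤ _ := (lintegral_mul_const _ hb).le

theorem eLpNorm_lconvolution_le [AddCommGroup G] [MeasurableAdd₂ G] [MeasurableNeg G]
    [SFinite μ] [μ.IsAddLeftInvariant] {q : ℝ≥0∞} (hq : 1 ≤ q) (hb : Measurable b)
    (ha : Measurable a) :
    eLpNorm (b ⋆ₗ[μ] a) q μ ≤ (∫⁻ y, b y ∂μ) * eLpNorm a q μ := by
  rcases eq_or_ne q ∞ with rfl | hq_top
  · exact eLpNorm_top_lconvolution_le hb
  have hr : 1 ≤ q.toReal := by simpa only [ENNReal.toReal_one] using ENNReal.toReal_mono hq_top hq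
  have hr₀ : 0 < q.toReal := one_pos.trans_le hr
  simp only [eLpNorm_eq_lintegral_rpow_enorm_toReal (one_pos.trans_le hq).ne' hq_top,
    enorm_eq_self]
  rw [one_div, ENNReal.rpow_inv_le_iff hr₀, ENNReal.mul_rpow_of_nonneg _ _ hr₀.le,
    ENNReal.rpow_inv_rpow hr₀.ne']
  calc ∫⁻ x, (b ⋆ₗ[μ] a) x ^ q.toReal ∂μ
      ≤ ∫⁻ x, (∫⁻ y, b y ∂μ) ^ (q.toReal - 1) * (b ⋆ₗ[μ] fun y => a y ^ q.toReal) x ∂μ :=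
        lintegral_mono (lconvolution_rpow_le hr hb ha)
    _ = (∫⁻ y, b y ∂μ) ^ (q.toReal - 1) * ((∫⁻ y, b y ∂μ) * ∫⁻ y, a y ^ q.toReal ∂μ) := by
        rw [lintegral_const_mul _ (measurable_lconvolution μ hb (ha.pow_const _)),
          lintegral_lconvolution hb (ha.pow_const _)]
    _ = (∫⁻ y, b y ∂μ) ^ q.toReal * ∫⁻ y, a y ^ q.toReal ∂μ := by
        have rpow_pred_mul : (∫⁻ y, b y ∂μ) ^ (q.toReal - 1) * (∫⁻ y, b y ∂μ) =
            (∫⁻ y, b y ∂μ) ^ q.toReal := by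
          simpa only [ENNReal.rpow_one, sub_add_cancel] using
            (ENNReal.rpow_add_of_nonneg (x := ∫⁻ y, b y ∂μ) _ _ (sub_nonneg.2 hr)
              zero_le_one).symm
        rw [← mul_assoc, rpow_pred_mul]

end Young

section Fourier

variable {V : Type*} [NormedAddCommGroup V] [InnerProductSpace ℝ V] [FiniteDimensional ℝ V]
  [MeasurableSpace V] [BorelSpace V]

lemma fourier_modulation (F : V → ℂ) (w η : V) :
    𝓕 (fun y => Real.fourierChar (-⟪y, w⟫) • F y) η = 𝓕 F (η + w) := by
  simp only [Real.fourier_eq, smul_smul, ← AddChar.map_add_eq_mul, inner_add_right, neg_add]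

theorem fourier_mul_eq_convolution {F h : V → ℂ} (hF : Integrable F) (hh : Continuous h)
    (hh_int : Integrable h) (hh_fourier : Integrable (𝓕 h)) :
    𝓕 (fun y => F y * h y) = 𝓕 h ⋆[ContinuousLinearMap.mul ℂ ℂ] 𝓕 F := by
  funext w
  set F_w : V → ℂ := fun y => Real.fourierChar (-⟪y, w⟫) • F y
  have hF_w : Integrable F_w := (Real.fourierIntegral_convergent_iff w).2 hF
  have inversion : h = 𝓕 (fun η => 𝓕 h (-η)) := by
    rw [← Real.fourierInv_eq_fourier_comp_neg, hh.fourierInv_fourier_eq hh_int hh_fourier]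
  have self_adjoint := VectorFourier.integral_fourierIntegral_smul_eq_flip (L := innerₗ V)
    (μ := volume) (ν := volume) Real.continuous_fourierChar continuous_inner
    hh_fourier.comp_neg hF_w
  rw [flip_innerₗ] at self_adjoint
  calc 𝓕 (fun y => F y * h y) w = ∫ y, 𝓕 (fun η => 𝓕 h (-η)) y • F_w y := by
        rw [← inversion, Real.fourier_eq]
        congr with y
        simp only [F_w, Circle.smul_def, smul_eq_mul]
        ring
    _ = ∫ η, 𝓕 h (-η) * 𝓕 F (w - -η) := by
        simp only [sub_neg_eq_add, add_comm w, ← fourier_modulation]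
        exact self_adjoint
    _ = ∫ η, 𝓕 h η * 𝓕 F (w - η) := integral_neg_eq_self (fun η => 𝓕 h η * 𝓕 F (w - η)) volume

/-- The normalizing constant `(2π)^{-d/2}` of `FT` and `STFT`. -/
def ftConst (d : ℕ) : ℝ := (2 * Real.pi) ^ (-(d : ℝ) / 2)

lemma ftConst_pos (d : ℕ) : 0 < ftConst d :=
  Real.rpow_pos_of_pos Real.two_pi_pos _

lemma ftConst_mul_self_mul (d : ℕ) : ftConst d * ftConst d * (2 * Real.pi) ^ d = 1 := by
  rw [ftConst, ← Real.rpow_add Real.two_pi_pos, ← Real.rpow_natCast,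
    ← Real.rpow_add Real.two_pi_pos, add_halves, neg_add_cancel, Real.rpow_zero]

variable {F h : EuclideanSpace ℝ (Fin d) → ℂ}

lemma FT_eq_fourier (F : EuclideanSpace ℝ (Fin d) → ℂ) (ξ : EuclideanSpace ℝ (Fin d)) :
    FT F ξ = ftConst d * 𝓕 F ((2 * Real.pi)⁻¹ • ξ) := by
  rw [FT, ftConst, Real.fourier_eq']
  congr with x
  rw [inner_smul_right, smul_eq_mul, mul_comm, neg_mul (2 : ℝ), neg_mul (2 * Real.pi),
    mul_inv_cancel_left₀ Real.two_pi_pos.ne', ofReal_neg]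

lemma fourier_eq_FT (F : EuclideanSpace ℝ (Fin d) → ℂ) (ξ : EuclideanSpace ℝ (Fin d)) :
    𝓕 F ξ = (ftConst d : ℂ)⁻¹ * FT F ((2 * Real.pi) • ξ) := by
  rw [FT_eq_fourier, inv_smul_smul₀ Real.two_pi_pos.ne',
    inv_mul_cancel_left₀ (ofReal_ne_zero.2 (ftConst_pos d).ne')]

lemma norm_FT (F : EuclideanSpace ℝ (Fin d) → ℂ) (ξ : EuclideanSpace ℝ (Fin d)) :
    ‖FT F ξ‖ = ftConst d * ‖𝓕 F ((2 * Real.pi)⁻¹ • ξ)‖ := by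
  rw [FT_eq_fourier, norm_mul, norm_real, Real.norm_of_nonneg (ftConst_pos d).le]

lemma continuous_FT (hF : Integrable F) : Continuous (FT F) := by
  have hcont : Continuous (𝓕 F) :=
    VectorFourier.fourierIntegral_continuous Real.continuous_fourierChar continuous_inner hF
  simp only [funext (FT_eq_fourier F)]
  fun_prop

lemma norm_FT_le (F : EuclideanSpace ℝ (Fin d) → ℂ) (ξ : EuclideanSpace ℝ (Fin d)) :
    ‖FT F ξ‖ ≤ ftConst d * ∫ x, ‖F x‖ := by
  rw [norm_FT]
  exact mul_le_mul_of_nonneg_left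
    (VectorFourier.norm_fourierIntegral_le_integral_norm _ _ _ _ _) (ftConst_pos d).le

lemma norm_FT_comp_sub_right (h : EuclideanSpace ℝ (Fin d) → ℂ) (x ξ : EuclideanSpace ℝ (Fin d)) :
    ‖FT (fun y => h (y - x)) ξ‖ = ‖FT h ξ‖ := by
  have phase := VectorFourier.fourierIntegral_comp_add_right Real.fourierChar volume
    (innerₗ (EuclideanSpace ℝ (Fin d))) h (-x)
  rw [norm_FT, norm_FT]
  congr 1
  exact (congrArg norm (congrFun phase _)).trans (Circle.norm_smul _ _)

lemma norm_FT_star (h : EuclideanSpace ℝ (Fin d) → ℂ) (ξ : EuclideanSpace ℝ (Fin d)) :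
    ‖FT (star h) ξ‖ = ‖FT h (-ξ)‖ := by
  have conj : 𝓕 (star h) ((2 * Real.pi)⁻¹ • ξ) = star (𝓕 h ((2 * Real.pi)⁻¹ • -ξ)) := by
    simp only [Real.fourier_eq', Complex.star_def, ← integral_conj]
    congr with y
    simp only [Pi.star_apply, Complex.star_def, smul_eq_mul, map_mul, ← Complex.exp_conj,
      conj_ofReal, conj_I, smul_neg, inner_neg_right, mul_neg, neg_mul, ofReal_neg, neg_neg]
  rw [norm_FT, norm_FT, conj, norm_star]

lemma norm_FT_convolution_le {χ : EuclideanSpace ℝ (Fin d) → ℂ} (hχ : Integrable χ)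
    (hh : Integrable h) (ξ : EuclideanSpace ℝ (Fin d)) :
    ‖FT (χ ⋆[ContinuousLinearMap.mul ℂ ℂ] h) ξ‖ ≤ (∫ x, ‖χ x‖) * ‖FT h ξ‖ := by
  rw [norm_FT, norm_FT, Real.fourier_mul_convolution_eq hχ hh, norm_mul, mul_left_comm]
  have : ‖𝓕 χ ((2 * Real.pi)⁻¹ • ξ)‖ ≤ ∫ x, ‖χ x‖ :=
    VectorFourier.norm_fourierIntegral_le_integral_norm _ _ _ _ _
  have := ftConst_pos d
  gcongr

theorem FT_mul (hF : Integrable F) (hh : Continuous h) (hh_int : Integrable h)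
    (hh_FT : Integrable (FT h)) (ξ : EuclideanSpace ℝ (Fin d)) :
    FT (fun y => F y * h y) ξ = ftConst d * (FT h ⋆[ContinuousLinearMap.mul ℂ ℂ] FT F) ξ := by
  have hpi : 2 * Real.pi ≠ 0 := Real.two_pi_pos.ne'
  have hh_fourier : Integrable (𝓕 h) := by
    simpa only [funext (fourier_eq_FT h)] using (hh_FT.comp_smul hpi).const_mul _
  rw [FT_eq_fourier, fourier_mul_eq_convolution hF hh hh_int hh_fourier]
  congr 1
  have constants : (ftConst d : ℂ)⁻¹ * (ftConst d : ℂ)⁻¹ * ((2 * Real.pi) ^ d : ℝ)⁻¹ = 1 := by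
    exact_mod_cast (by rw [← mul_inv, ← mul_inv, ftConst_mul_self_mul, inv_one] :
      (ftConst d)⁻¹ * (ftConst d)⁻¹ * ((2 * Real.pi) ^ d)⁻¹ = 1)
  calc (𝓕 h ⋆[ContinuousLinearMap.mul ℂ ℂ] 𝓕 F) ((2 * Real.pi)⁻¹ • ξ)
      = ∫ η, (ftConst d : ℂ)⁻¹ * (ftConst d : ℂ)⁻¹ *
          (FT h ((2 * Real.pi) • η) * FT F (ξ - (2 * Real.pi) • η)) := by
        rw [convolution_def]
        congr with η
        rw [ContinuousLinearMap.mul_apply', fourier_eq_FT, fourier_eq_FT, smul_sub,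
          smul_inv_smul₀ hpi, mul_mul_mul_comm]
    _ = ∫ η, FT h η * FT F (ξ - η) := by
        rw [integral_const_mul, Measure.integral_comp_smul volume
          (fun η => FT h η * FT F (ξ - η)), finrank_euclideanSpace_fin,
          abs_of_pos (inv_pos.2 (pow_pos Real.two_pi_pos d)), real_smul, ← mul_assoc, constants,
          one_mul]

lemma enorm_FT_mul_le (hF : Integrable F) (hh : Continuous h) (hh_int : Integrable h)
    (hh_FT : Integrable (FT h)) (ξ : EuclideanSpace ℝ (Fin d)) :
    ‖FT (fun y => F y * h y) ξ‖ₑ ≤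
      ENNReal.ofReal (ftConst d) * ((fun η => ‖FT h η‖ₑ) ⋆ₗ fun η => ‖FT F η‖ₑ) ξ := by
  rw [FT_mul hF hh hh_int hh_FT, enorm_mul, ← ofReal_norm, norm_real,
    Real.norm_of_nonneg (ftConst_pos d).le, lconvolution_def]
  gcongr
  refine (enorm_integral_le_lintegral_enorm _).trans_eq ?_
  simp only [ContinuousLinearMap.mul_apply', enorm_mul, neg_add_eq_sub]

end Fourier

section Cutoff

variable {s : ℝ} {φ ψ : EuclideanSpace ℝ (Fin d) → ℂ}

protected lemma IsSCutoff.integrable (hφ : IsSCutoff s φ) : Integrable φ :=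
  hφ.1.continuous.integrable_of_hasCompactSupport hφ.2.1

lemma IsSCutoff.integrable_mul (hφ : IsSCutoff s φ) {f : EuclideanSpace ℝ (Fin d) → ℂ}
    (hf : LocallyIntegrable f) : Integrable fun x => φ x * f x :=
  hf.integrable_smul_left_of_hasCompactSupport hφ.1.continuous hφ.2.1

lemma IsSCutoff.integrable_FT (hs : 0 < s) (hφ : IsSCutoff s φ) : Integrable (FT φ) := by
  obtain ⟨C, -, hC⟩ := hφ.2.2 1 one_pos
  exact ((integrable_exp_neg_mul_norm_rpow_s10 volume (one_div_pos.2 hs) one_pos).const_mul C).mono'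
    (continuous_FT hφ.integrable).aestronglyMeasurable (.of_forall hC)

protected lemma IsSCutoff.mul (hs : 1 ≤ s) (hφ : IsSCutoff s φ) (hψ : IsSCutoff s ψ) :
    IsSCutoff s (fun x => φ x * ψ x) := by
  have hs₀ : 0 < s := one_pos.trans_le hs
  refine ⟨hφ.1.mul hψ.1, hφ.2.1.mul_right, fun N hN => ?_⟩
  obtain ⟨A, hA, hφN⟩ := hφ.2.2 N hN
  obtain ⟨B, hB, hψN⟩ := hψ.2.2 (N + 1) (by linarith)
  set J := ∫ η : EuclideanSpace ℝ (Fin d), Real.exp (-1 * ‖η‖ ^ (1 / s))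
  have hJ : 0 < J := integral_exp_pos
    (integrable_exp_neg_mul_norm_rpow_s10 volume (one_div_pos.2 hs₀) one_pos)
  have hc := ftConst_pos d
  refine ⟨ftConst d * (B * A * J), by positivity, fun ξ => ?_⟩
  have integrand_le (η : EuclideanSpace ℝ (Fin d)) : ‖FT ψ η * FT φ (ξ - η)‖ ≤
      B * A * Real.exp (-N * ‖ξ‖ ^ (1 / s)) * Real.exp (-1 * ‖η‖ ^ (1 / s)) := by
    calc ‖FT ψ η * FT φ (ξ - η)‖
        ≤ B * Real.exp (-(N + 1) * ‖η‖ ^ (1 / s)) *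
            (A * Real.exp (-N * ‖ξ - η‖ ^ (1 / s))) := by
          rw [norm_mul]
          gcongr
          exacts [hψN η, hφN (ξ - η)]
      _ = B * A * (Real.exp (-(N + 1) * ‖η‖ ^ (1 / s)) * Real.exp (-N * ‖ξ - η‖ ^ (1 / s))) :=
          mul_mul_mul_comm _ _ _ _
      _ ≤ B * A * (Real.exp (-N * ‖ξ‖ ^ (1 / s)) * Real.exp (-1 * ‖η‖ ^ (1 / s))) :=
          mul_le_mul_of_nonneg_left (exp_neg_norm_rpow_mul_le (one_div_nonneg.2 hs₀.le)
            ((div_le_one hs₀).2 hs) hN.le ξ η) (by positivity)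
      _ = _ := (mul_assoc _ _ _).symm
  rw [FT_mul hφ.integrable hψ.1.continuous hψ.integrable (hψ.integrable_FT hs₀), norm_mul,
    norm_real, Real.norm_of_nonneg hc.le]
  calc ftConst d * ‖∫ η, FT ψ η * FT φ (ξ - η)‖
      ≤ ftConst d * (B * A * Real.exp (-N * ‖ξ‖ ^ (1 / s)) * J) := by
        gcongr
        rw [← integral_const_mul]
        exact norm_integral_le_of_norm_le ((integrable_exp_neg_mul_norm_rpow_s10 volume
          (one_div_pos.2 hs₀) one_pos).const_mul _) (.of_forall integrand_le)
    _ = ftConst d * (B * A * J) * Real.exp (-N * ‖ξ‖ ^ (1 / s)) := by ring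

protected lemma IsSCutoff.star (hφ : IsSCutoff s φ) : IsSCutoff s (star φ) := by
  refine ⟨Complex.conjCLE.contDiff.comp hφ.1, hφ.2.1.comp_left (star_zero ℂ), fun N hN => ?_⟩
  obtain ⟨C, hC, hdecay⟩ := hφ.2.2 N hN
  exact ⟨C, hC, fun ξ => by simpa only [norm_FT_star, norm_neg] using hdecay (-ξ)⟩

lemma IsSCutoff.comp_sub_right (hφ : IsSCutoff s φ) (x : EuclideanSpace ℝ (Fin d)) :
    IsSCutoff s (fun y => φ (y - x)) := by
  refine ⟨hφ.1.comp (contDiff_id.sub contDiff_const),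
    hφ.2.1.comp_homeomorph (Homeomorph.subRight x), fun N hN => ?_⟩
  simpa only [norm_FT_comp_sub_right] using hφ.2.2 N hN

protected lemma IsSCutoff.convolution {χ : EuclideanSpace ℝ (Fin d) → ℂ} (hχ : Integrable χ)
    (hχ_supp : HasCompactSupport χ) (hφ : IsSCutoff s φ) :
    IsSCutoff s (χ ⋆[ContinuousLinearMap.mul ℂ ℂ] φ) := by
  refine ⟨?_, hχ_supp.convolution _ hφ.2.1, fun N hN => ?_⟩
  · exact hφ.2.1.contDiff_convolution_right (ContinuousLinearMap.mul ℝ ℂ) hχ.locallyIntegrable hφ.1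
  obtain ⟨C, hC, hdecay⟩ := hφ.2.2 N hN
  refine ⟨(∫ x, ‖χ x‖) * C + 1, by positivity, fun ξ => ?_⟩
  calc ‖FT (χ ⋆[ContinuousLinearMap.mul ℂ ℂ] φ) ξ‖
      ≤ (∫ x, ‖χ x‖) * (C * Real.exp (-N * ‖ξ‖ ^ (1 / s))) :=
        (norm_FT_convolution_le hχ hφ.integrable ξ).trans (by gcongr; exact hdecay ξ)
    _ ≤ ((∫ x, ‖χ x‖) * C + 1) * Real.exp (-N * ‖ξ‖ ^ (1 / s)) := by
        rw [← mul_assoc]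
        gcongr
        exact le_add_of_nonneg_right zero_le_one

variable {ω : EuclideanSpace ℝ (Fin d) → ℝ}

lemma IsSAdmissible.exists_le_exp_mul (hω : IsSAdmissible s ω) :
    ∃ C k : ℝ, 0 < C ∧ 0 < k ∧ ∀ x y, ω (x + y) ≤ C * Real.exp (k * ‖x‖ ^ (1 / s)) * ω y := by
  obtain ⟨-, hpos, v, -, -, -, -, C₀, k, C₁, hC₀, hk, hC₁, hv, hmoderate⟩ := hω
  refine ⟨C₁ * C₀, k, by positivity, hk, fun x y => (hmoderate x y).trans ?_⟩
  rw [mul_assoc C₁ C₀]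
  gcongr
  exacts [(hpos y).le, hv x]

end Cutoff

section STFT

variable {g F : EuclideanSpace ℝ (Fin d) → ℂ}

lemma STFT_eq_FT (g F : EuclideanSpace ℝ (Fin d) → ℂ) (x ξ : EuclideanSpace ℝ (Fin d)) :
    STFT g F x ξ = FT (fun y => F y * star g (y - x)) ξ := by
  simp only [STFT, FT, real_inner_comm ξ, Pi.star_apply, Complex.star_def]

lemma continuous_STFT_left (hF : Integrable F) (hg : Continuous g) (hg_supp : HasCompactSupport g)
    (ξ : EuclideanSpace ℝ (Fin d)) : Continuous fun x => STFT g F x ξ := by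
  obtain ⟨C, hC⟩ := hg_supp.exists_bound_of_continuous hg
  have norm_phase (y : EuclideanSpace ℝ (Fin d)) :
      ‖Complex.exp (-(⟪ξ, y⟫ : ℝ) * Complex.I)‖ = 1 := by
    rw [← ofReal_neg, norm_exp_ofReal_mul_I]
  refine continuous_const.mul (continuous_of_dominated (bound := fun y => ‖F y‖ * C) (fun x => ?_)
    (fun x => .of_forall fun y => ?_) (hF.norm.mul_const C) (.of_forall fun y => by fun_prop))
  · have : Continuous fun y => Complex.exp (-(⟪ξ, y⟫ : ℝ) * Complex.I) := by fun_prop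
    have : Continuous fun y => (starRingEnd ℂ) (g (y - x)) := by fun_prop
    fun_prop
  · rw [norm_mul, norm_phase, mul_one, norm_mul, RCLike.norm_conj]
    exact mul_le_mul_of_nonneg_left (hC _) (norm_nonneg _)

lemma STFT_eq_zero {x : EuclideanSpace ℝ (Fin d)} (hx : x ∉ tsupport F - tsupport g)
    (ξ : EuclideanSpace ℝ (Fin d)) : STFT g F x ξ = 0 := by
  have vanish (y : EuclideanSpace ℝ (Fin d)) : F y * (starRingEnd ℂ) (g (y - x)) = 0 := by
    by_contra hne
    refine hx ⟨y, subset_tsupport _ (left_ne_zero_of_mul hne), y - x,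
      subset_tsupport _ fun hg₀ => ?_, sub_sub_cancel y x⟩
    exact right_ne_zero_of_mul hne (by rw [hg₀, map_zero])
  simp only [STFT, vanish, zero_mul, integral_zero, mul_zero]

lemma enorm_STFT_le {s : ℝ} (hs : 0 < s) (hg : IsSCutoff s g) (hF : Integrable F)
    (x ξ : EuclideanSpace ℝ (Fin d)) :
    ‖STFT g F x ξ‖ₑ ≤ ENNReal.ofReal (ftConst d) *
      ((fun η => ‖FT (star g) η‖ₑ) ⋆ₗ fun η => ‖FT F η‖ₑ) ξ := by
  have hgx := hg.star.comp_sub_right x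
  simpa only [STFT_eq_FT, enorm_eq_iff_norm_eq.2 (norm_FT_comp_sub_right (star g) x _)] using
    enorm_FT_mul_le hF hgx.1.continuous hgx.integrable (hgx.integrable_FT hs) ξ

lemma exists_eLpNorm_STFT_le {s : ℝ} (hs : 0 < s) (hg : IsSCutoff s g) (hF : Integrable F)
    (hF_supp : HasCompactSupport F) (p : ℝ≥0∞) :
    ∃ A : ℝ≥0, ∀ ξ, eLpNorm (fun x => STFT g F x ξ) p volume ≤
      A * ((fun η => ‖FT (star g) η‖ₑ) ⋆ₗ fun η => ‖FT F η‖ₑ) ξ := by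
  set K := tsupport F - tsupport g
  have hK : IsCompact K := by
    simpa only [sub_image_prod] using
      (hF_supp.isCompact.prod hg.2.1.isCompact).image continuous_sub
  set A : ℝ≥0∞ := ENNReal.ofReal (ftConst d) * volume K ^ (1 / p.toReal)
  have hA : A ≠ ∞ := ENNReal.mul_ne_top ENNReal.ofReal_ne_top
    (ENNReal.rpow_ne_top_of_nonneg (by positivity) hK.measure_ne_top)
  refine ⟨A.toNNReal, fun ξ => ?_⟩
  set M := ENNReal.ofReal (ftConst d) * ((fun η => ‖FT (star g) η‖ₑ) ⋆ₗ fun η => ‖FT F η‖ₑ) ξ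
    with hM
  calc eLpNorm (fun x => STFT g F x ξ) p volume
      ≤ eLpNorm (K.indicator fun _ => M) p volume := by
        refine eLpNorm_mono_enorm fun x => ?_
        by_cases hx : x ∈ K
        · rw [indicator_of_mem hx, enorm_eq_self]
          exact enorm_STFT_le hs hg hF x ξ
        · rw [STFT_eq_zero hx, enorm_zero]
          exact bot_le
    _ ≤ M * volume K ^ (1 / p.toReal) := by
        simpa only [enorm_eq_self] using eLpNorm_indicator_const_le M p
    _ = A.toNNReal * ((fun η => ‖FT (star g) η‖ₑ) ⋆ₗ fun η => ‖FT F η‖ₑ) ξ := by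
        rw [ENNReal.coe_toNNReal hA, hM, mul_right_comm]

lemma FT_mul_convolution {χ : EuclideanSpace ℝ (Fin d) → ℂ} (hF : Integrable F)
    (hχ : Integrable χ) (hg : Continuous g) (hg_supp : HasCompactSupport g)
    (ξ : EuclideanSpace ℝ (Fin d)) :
    FT (fun y => F y * (χ ⋆[ContinuousLinearMap.mul ℂ ℂ] star g) y) ξ =
      ∫ x, χ x * STFT g F x ξ := by
  obtain ⟨C, hC⟩ := hg_supp.exists_bound_of_continuous hg
  set e : EuclideanSpace ℝ (Fin d) → ℂ := fun y => Complex.exp (-(⟪y, ξ⟫ : ℝ) * Complex.I)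
  have he (y : EuclideanSpace ℝ (Fin d)) : ‖e y‖ = 1 := by
    simp only [e, ← ofReal_neg, norm_exp_ofReal_mul_I]
  have hΦ : Integrable
      (Function.uncurry fun x y => χ x * F y * (star g (y - x) * e y)) (volume.prod volume) := by
    refine (hχ.mul_prod hF).mul_bdd (c := C) (Continuous.aestronglyMeasurable ?_)
      (.of_forall fun z => ?_)
    · simp only [e, Pi.star_apply]
      fun_prop
    · rw [norm_mul, he, mul_one, Pi.star_apply, norm_star]
      exact hC _
  calc FT (fun y => F y * (χ ⋆[ContinuousLinearMap.mul ℂ ℂ] star g) y) ξ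
      = ftConst d * ∫ y, ∫ x, χ x * F y * (star g (y - x) * e y) := by
        simp only [FT, ftConst, convolution_def, ContinuousLinearMap.mul_apply',
          ← integral_const_mul, ← integral_mul_const]
        congr with y
        congr with x
        ring
    _ = ftConst d * ∫ x, ∫ y, χ x * F y * (star g (y - x) * e y) := by
        rw [← integral_integral_swap hΦ]
    _ = ∫ x, χ x * STFT g F x ξ := by
        simp only [STFT_eq_FT, FT, ftConst, ← integral_const_mul]
        congr with x
        congr with y
        ring

end STFT

section Seminorms

variable {ω : EuclideanSpace ℝ (Fin d) → ℝ}

/-- The weighted Fourier modulus `|F̂| ω`, whose `L^q` norm over a cone `Γ` is the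
Fourier–Lebesgue seminorm `FLSemi ω q F Γ`. It takes values in `ℝ≥0∞` so that it can be convolved
before it is known to be integrable. -/
def weightedFT (ω : EuclideanSpace ℝ (Fin d) → ℝ) (F : EuclideanSpace ℝ (Fin d) → ℂ)
    (ξ : EuclideanSpace ℝ (Fin d)) : ℝ≥0∞ :=
  ‖FT F ξ‖ₑ * ENNReal.ofReal (ω ξ)

lemma measurable_weightedFT {F : EuclideanSpace ℝ (Fin d) → ℂ} (hω : Measurable ω)
    (hF : Integrable F) : Measurable (weightedFT ω F) :=
  (continuous_FT hF).measurable.enorm.mul hω.ennreal_ofReal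

lemma FLSemi_eq_eLpNorm_weightedFT (hω : ∀ ξ, 0 < ω ξ) (q : ℝ≥0∞)
    (F : EuclideanSpace ℝ (Fin d) → ℂ) (Γ : Set (EuclideanSpace ℝ (Fin d))) :
    FLSemi ω q F Γ = eLpNorm (weightedFT ω F) q (volume.restrict Γ) :=
  eLpNorm_congr_enorm_ae (.of_forall fun ξ => by
    rw [enorm_eq_self, weightedFT, enorm_mul, enorm_norm, Real.enorm_of_nonneg (hω ξ).le])

lemma ModSemi_eq_eLpNorm (g F : EuclideanSpace ℝ (Fin d) → ℂ) (ω : EuclideanSpace ℝ (Fin d) → ℝ)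
    (p : ℝ≥0∞) {q : ℝ≥0∞} (hq : q ≠ 0) (Γ : Set (EuclideanSpace ℝ (Fin d))) :
    ModSemi g F ω p q Γ =
      eLpNorm (fun ξ => eLpNorm (fun x => STFT g F x ξ) p volume * ENNReal.ofReal (ω ξ)) q
        (volume.restrict Γ) := by
  simp only [ModSemi, eLpNorm, eLpNorm', eLpNormEssSup, hq, if_false, enorm_eq_self]

end Seminorms

section Cone

lemma norm_smul_sub_sub_lt {E : Type*} [SeminormedAddCommGroup E] [NormedSpace ℝ E] {δ t : ℝ}
    (hδ : 0 < δ) (ht : 0 < t) {ξ ξ₀ η : E} (hξ : ‖t • ξ - ξ₀‖ < δ)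
    (hη : ‖η‖ ≤ δ / (‖ξ₀‖ + δ) * ‖ξ‖) : ‖t • (ξ - η) - ξ₀‖ < δ + δ := by
  have norm_smul_ξ : t * ‖ξ‖ ≤ ‖ξ₀‖ + δ := by
    rw [← norm_smul_of_nonneg ht.le]
    linarith [norm_le_norm_add_norm_sub' (t • ξ) ξ₀]
  have norm_smul_η : ‖t • η‖ ≤ δ := by
    calc ‖t • η‖ ≤ t * (δ / (‖ξ₀‖ + δ) * ‖ξ‖) := by
          rw [norm_smul_of_nonneg ht.le]
          gcongr
      _ = δ / (‖ξ₀‖ + δ) * (t * ‖ξ‖) := mul_left_comm _ _ _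
      _ ≤ δ / (‖ξ₀‖ + δ) * (‖ξ₀‖ + δ) := by gcongr
      _ = δ := div_mul_cancel₀ _ (by positivity)
  calc ‖t • (ξ - η) - ξ₀‖ = ‖t • ξ - ξ₀ - t • η‖ := by rw [smul_sub, sub_right_comm]
    _ ≤ ‖t • ξ - ξ₀‖ + ‖t • η‖ := norm_sub_le _ _
    _ < δ + δ := add_lt_add_of_lt_of_le hξ norm_smul_η

lemma IsCone.mem_of_norm_smul_sub_lt {Γ : Set (EuclideanSpace ℝ (Fin d))} (hΓ : IsCone Γ)
    {ξ₀ : EuclideanSpace ℝ (Fin d)} {ε : ℝ} (hball : Metric.ball ξ₀ ε ⊆ Γ) {t : ℝ} (ht : 0 < t)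
    {ξ : EuclideanSpace ℝ (Fin d)} (hξ : ‖t • ξ - ξ₀‖ < ε) : ξ ∈ Γ := by
  simpa only [inv_smul_smul₀ ht.ne'] using
    hΓ.2 _ (hball (mem_ball_iff_norm.2 hξ)) t⁻¹ (inv_pos.2 ht)

lemma IsCone.exists_open_subcone {Γ : Set (EuclideanSpace ℝ (Fin d))} (hΓ : IsCone Γ)
    (hΓ_open : IsOpen Γ) {ξ₀ : EuclideanSpace ℝ (Fin d)} (hξ₀ : ξ₀ ∈ Γ) :
    ∃ Γ', IsOpen Γ' ∧ IsCone Γ' ∧ ξ₀ ∈ Γ' ∧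
      ∃ c : ℝ, 0 < c ∧ ∀ ξ ∈ Γ', ∀ η, ‖η‖ ≤ c * ‖ξ‖ → ξ - η ∈ Γ := by
  obtain ⟨ε, hε, hball⟩ := Metric.isOpen_iff.1 hΓ_open ξ₀ hξ₀
  refine ⟨{ξ | ∃ t : ℝ, 0 < t ∧ ‖t • ξ - ξ₀‖ < ε / 2}, ?isOpen, ⟨?zero_notMem, ?smul_mem⟩, ?mem,
    (ε / 2) / (‖ξ₀‖ + ε / 2), by positivity, ?sub_mem⟩
  case isOpen =>
    have eq_iUnion : {ξ | ∃ t : ℝ, 0 < t ∧ ‖t • ξ - ξ₀‖ < ε / 2} =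
        ⋃ (t : ℝ) (_ : 0 < t), {ξ | ‖t • ξ - ξ₀‖ < ε / 2} := by
      ext
      simp only [mem_ofPred_eq, mem_iUnion, exists_prop]
    rw [eq_iUnion]
    exact isOpen_iUnion fun t => isOpen_iUnion fun _ => isOpen_lt (by fun_prop) continuous_const
  case zero_notMem =>
    rintro ⟨t, ht, h⟩
    exact hΓ.1 (hΓ.mem_of_norm_smul_sub_lt hball ht (h.trans (half_lt_self hε)))
  case smul_mem =>
    rintro ξ ⟨t, ht, h⟩ r hr
    exact ⟨t / r, by positivity, by rwa [smul_smul, div_mul_cancel₀ _ hr.ne']⟩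
  case mem => exact ⟨1, one_pos, by simpa only [one_smul, sub_self, norm_zero] using half_pos hε⟩
  case sub_mem =>
    rintro ξ ⟨t, ht, h⟩ η hη
    refine hΓ.mem_of_norm_smul_sub_lt hball ht ?_
    simpa only [add_halves] using norm_smul_sub_sub_lt (half_pos hε) ht h hη

end Cone

section FourierLebesgueToModulation

variable {s : ℝ} {ω : EuclideanSpace ℝ (Fin d) → ℝ} {h F : EuclideanSpace ℝ (Fin d) → ℂ}

lemma IsSCutoff.exists_enorm_FT_mul_weight_le (hω : IsSAdmissible s ω) (hh : IsSCutoff s h) :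
    ∃ C : ℝ≥0, ∀ ξ η, ‖FT h η‖ₑ * ENNReal.ofReal (ω ξ) ≤
      C * (stretchedExp s η * ENNReal.ofReal (ω (ξ - η))) := by
  obtain ⟨A, k, hA, hk, hmoderate⟩ := hω.exists_le_exp_mul
  obtain ⟨B, hB, hdecay⟩ := hh.2.2 (k + 1) (by linarith)
  refine ⟨(B * A).toNNReal, fun ξ η => ?_⟩
  have hpos := hω.2.1
  have real_bound : ‖FT h η‖ * ω ξ ≤ B * A * (Real.exp (-‖η‖ ^ (1 / s)) * ω (ξ - η)) := by
    calc ‖FT h η‖ * ω ξ ≤ B * Real.exp (-(k + 1) * ‖η‖ ^ (1 / s)) *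
          (A * Real.exp (k * ‖η‖ ^ (1 / s)) * ω (ξ - η)) := by
          gcongr
          exacts [(hpos ξ).le, hdecay η, by simpa only [add_sub_cancel] using hmoderate η (ξ - η)]
      _ = B * A * (Real.exp (-(k + 1) * ‖η‖ ^ (1 / s) + k * ‖η‖ ^ (1 / s)) * ω (ξ - η)) := by
          rw [Real.exp_add]
          ring
      _ = _ := by ring_nf
  rw [← ofReal_norm, stretchedExp, ← ENNReal.ofReal_mul (norm_nonneg _),
    ← ENNReal.ofReal_mul (Real.exp_pos _).le]
  exact (ENNReal.ofReal_le_ofReal real_bound).trans_eq (ENNReal.ofReal_mul (by positivity))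

lemma IsSCutoff.exists_enorm_FT_mul_weight_le_of_mul_norm_le (hs : 0 < s)
    (hω : IsSAdmissible s ω) (hh : IsSCutoff s h) {c : ℝ} (hc : 0 < c) :
    ∃ C : ℝ≥0, ∀ ξ η, c * ‖ξ‖ ≤ ‖η‖ → ‖FT h η‖ₑ * ENNReal.ofReal (ω ξ) ≤
      C * (stretchedExp s η * stretchedExp s ξ) := by
  obtain ⟨A, k, hA, hk, hmoderate⟩ := hω.exists_le_exp_mul
  have hcr : 0 < c ^ (1 / s) := Real.rpow_pos_of_pos hc _
  obtain ⟨B, hB, hdecay⟩ := hh.2.2 ((k + 1) / c ^ (1 / s) + 1) (by positivity)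
  have hω₀ := hω.2.1 0
  refine ⟨(B * A * ω 0).toNNReal, fun ξ η hξη => ?_⟩
  have hξη_rpow : (k + 1) * ‖ξ‖ ^ (1 / s) ≤ (k + 1) / c ^ (1 / s) * ‖η‖ ^ (1 / s) := by
    rw [div_mul_eq_mul_div, le_div_iff₀ hcr, mul_assoc, mul_comm (_ ^ _),
      ← Real.mul_rpow hc.le (norm_nonneg _)]
    gcongr
  have real_bound : ‖FT h η‖ * ω ξ ≤
      B * A * ω 0 * (Real.exp (-‖η‖ ^ (1 / s)) * Real.exp (-‖ξ‖ ^ (1 / s))) := by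
    calc ‖FT h η‖ * ω ξ ≤ B * Real.exp (-((k + 1) / c ^ (1 / s) + 1) * ‖η‖ ^ (1 / s)) *
          (A * Real.exp (k * ‖ξ‖ ^ (1 / s)) * ω 0) := by
          gcongr
          exacts [(hω.2.1 ξ).le, hdecay η, by simpa only [add_zero] using hmoderate ξ 0]
      _ = B * A * ω 0 * Real.exp
            (-((k + 1) / c ^ (1 / s) + 1) * ‖η‖ ^ (1 / s) + k * ‖ξ‖ ^ (1 / s)) := by
          rw [Real.exp_add]
          ring
      _ ≤ B * A * ω 0 * Real.exp (-‖η‖ ^ (1 / s) + -‖ξ‖ ^ (1 / s)) :=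
          mul_le_mul_of_nonneg_left (Real.exp_le_exp.2 (by linarith)) (by positivity)
      _ = _ := by rw [Real.exp_add]
  rw [← ofReal_norm, stretchedExp, stretchedExp, ← ENNReal.ofReal_mul (norm_nonneg _),
    ← ENNReal.ofReal_mul (Real.exp_pos _).le]
  exact (ENNReal.ofReal_le_ofReal real_bound).trans_eq (ENNReal.ofReal_mul (by positivity))

lemma exists_enorm_FT_mul_enorm_FT_mul_weight_le (hs : 0 < s) (hω : IsSAdmissible s ω)
    (hh : IsSCutoff s h) (F : EuclideanSpace ℝ (Fin d) → ℂ)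
    {Γ Γ' : Set (EuclideanSpace ℝ (Fin d))} {c : ℝ} (hc : 0 < c)
    (hΓ' : ∀ ξ ∈ Γ', ∀ η, ‖η‖ ≤ c * ‖ξ‖ → ξ - η ∈ Γ) :
    ∃ C : ℝ≥0, ∀ ξ ∈ Γ', ∀ η, ‖FT h η‖ₑ * ‖FT F (ξ - η)‖ₑ * ENNReal.ofReal (ω ξ) ≤
      C * (stretchedExp s η * (Γ.indicator (weightedFT ω F) (ξ - η) + stretchedExp s ξ)) := by
  obtain ⟨A, hnear⟩ := hh.exists_enorm_FT_mul_weight_le hω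
  obtain ⟨B, hfar⟩ := hh.exists_enorm_FT_mul_weight_le_of_mul_norm_le hs hω hc
  set L : ℝ≥0 := (ftConst d * ∫ x, ‖F x‖).toNNReal
  have hL (ξ : EuclideanSpace ℝ (Fin d)) : ‖FT F ξ‖ₑ ≤ L := by
    rw [← ofReal_norm]
    exact ENNReal.ofReal_le_ofReal (norm_FT_le F ξ)
  refine ⟨max A (B * L), fun ξ hξ η => ?_⟩
  rw [mul_right_comm]
  rcases le_total ‖η‖ (c * ‖ξ‖) with hη | hη
  · calc ‖FT h η‖ₑ * ENNReal.ofReal (ω ξ) * ‖FT F (ξ - η)‖ₑ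
        ≤ A * (stretchedExp s η * ENNReal.ofReal (ω (ξ - η))) * ‖FT F (ξ - η)‖ₑ :=
          mul_le_mul_left (hnear ξ η) _
      _ = A * (stretchedExp s η * Γ.indicator (weightedFT ω F) (ξ - η)) := by
          rw [indicator_of_mem (hΓ' ξ hξ η hη), weightedFT]
          ring
      _ ≤ _ := by
          gcongr
          exacts [le_max_left _ _, le_self_add]
  · calc ‖FT h η‖ₑ * ENNReal.ofReal (ω ξ) * ‖FT F (ξ - η)‖ₑ
        ≤ B * (stretchedExp s η * stretchedExp s ξ) * L :=
          mul_le_mul' (hfar ξ η hη) (hL _)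
      _ = (B * L : ℝ≥0) * (stretchedExp s η * stretchedExp s ξ) := by
          rw [ENNReal.coe_mul, mul_right_comm]
      _ ≤ _ := by
          gcongr
          exacts [le_max_right _ _, le_add_self]

lemma exists_lconvolution_enorm_FT_mul_weight_le (hs : 0 < s) (hω : IsSAdmissible s ω)
    (hh : IsSCutoff s h) (F : EuclideanSpace ℝ (Fin d) → ℂ)
    {Γ Γ' : Set (EuclideanSpace ℝ (Fin d))} {c : ℝ} (hc : 0 < c)
    (hΓ' : ∀ ξ ∈ Γ', ∀ η, ‖η‖ ≤ c * ‖ξ‖ → ξ - η ∈ Γ) :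
    ∃ C : ℝ≥0, ∀ ξ ∈ Γ',
      ((fun η => ‖FT h η‖ₑ) ⋆ₗ fun η => ‖FT F η‖ₑ) ξ * ENNReal.ofReal (ω ξ) ≤
        C * ((stretchedExp s ⋆ₗ Γ.indicator (weightedFT ω F)) ξ + stretchedExp s ξ) := by
  obtain ⟨C, hC⟩ := exists_enorm_FT_mul_enorm_FT_mul_weight_le hs hω hh F hc hΓ'
  set J : ℝ≥0∞ := ∫⁻ η : EuclideanSpace ℝ (Fin d), stretchedExp s η
  have hJ : J ≠ ∞ := (lintegral_stretchedExp_lt_top hs).ne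
  have he : Measurable (stretchedExp s : EuclideanSpace ℝ (Fin d) → ℝ≥0∞) := measurable_stretchedExp
  refine ⟨C * (max 1 J).toNNReal, fun ξ hξ => ?_⟩
  set Y := (stretchedExp s ⋆ₗ Γ.indicator (weightedFT ω F)) ξ
  calc ((fun η => ‖FT h η‖ₑ) ⋆ₗ fun η => ‖FT F η‖ₑ) ξ * ENNReal.ofReal (ω ξ)
      = ∫⁻ η, ‖FT h η‖ₑ * ‖FT F (ξ - η)‖ₑ * ENNReal.ofReal (ω ξ) := by
        rw [lconvolution_def, ← lintegral_mul_const' _ _ ENNReal.ofReal_ne_top]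
        simp only [neg_add_eq_sub]
    _ ≤ ∫⁻ η, C * (stretchedExp s η *
          (Γ.indicator (weightedFT ω F) (ξ - η) + stretchedExp s ξ)) := lintegral_mono (hC ξ hξ)
    _ = C * (Y + J * stretchedExp s ξ) := by
        rw [lintegral_const_mul' _ _ ENNReal.coe_ne_top]
        simp only [mul_add (stretchedExp s _)]
        rw [lintegral_add_right _ (he.mul_const _), lintegral_mul_const _ he]
        simp only [Y, lconvolution_def, neg_add_eq_sub, J]
    _ ≤ C * (max 1 J * Y + max 1 J * stretchedExp s ξ) := by
        gcongr
        exacts [le_mul_of_one_le_left' (le_max_left _ _), le_max_right _ _]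
    _ = (C * (max 1 J).toNNReal : ℝ≥0) * (Y + stretchedExp s ξ) := by
        rw [ENNReal.coe_mul, ENNReal.coe_toNNReal (by finiteness), mul_assoc, mul_add (max 1 J)]

lemma eLpNorm_stretchedExp_lconvolution_add_lt_top (hs : 0 < s) {q : ℝ≥0∞} (hq : 1 ≤ q)
    {W : EuclideanSpace ℝ (Fin d) → ℝ≥0∞} (hW : Measurable W) (hW_fin : eLpNorm W q volume < ∞) :
    eLpNorm ((stretchedExp s ⋆ₗ W) + stretchedExp s) q volume < ∞ := by
  have hY := measurable_lconvolution volume (measurable_stretchedExp (s := s)) hW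
  calc eLpNorm ((stretchedExp s ⋆ₗ W) + stretchedExp s) q volume
      ≤ eLpNorm (stretchedExp s ⋆ₗ W) q volume + eLpNorm (stretchedExp s) q volume :=
        eLpNorm_add_le hY.aestronglyMeasurable measurable_stretchedExp.aestronglyMeasurable hq
    _ ≤ (∫⁻ η, stretchedExp s η) * eLpNorm W q volume + eLpNorm (stretchedExp s) q volume := by
        gcongr
        exact eLpNorm_lconvolution_le hq measurable_stretchedExp hW
    _ < ∞ := ENNReal.add_lt_top.2 ⟨ENNReal.mul_lt_top (lintegral_stretchedExp_lt_top hs) hW_fin,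
        eLpNorm_stretchedExp_lt_top hs hq⟩

theorem IsCone.exists_subcone_ModSemi_lt_top (hs : 0 < s) {p q : ℝ≥0∞} (hq : 1 ≤ q)
    (hω : IsSAdmissible s ω) {g : EuclideanSpace ℝ (Fin d) → ℂ} (hg : IsSCutoff s g)
    (hF : Integrable F) (hF_supp : HasCompactSupport F)
    {Γ : Set (EuclideanSpace ℝ (Fin d))} (hΓ : IsCone Γ) (hΓ_open : IsOpen Γ)
    {ξ₀ : EuclideanSpace ℝ (Fin d)} (hξ₀ : ξ₀ ∈ Γ) (hfin : FLSemi ω q F Γ < ∞) :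
    ∃ Γ', IsOpen Γ' ∧ IsCone Γ' ∧ ξ₀ ∈ Γ' ∧ ModSemi g F ω p q Γ' < ∞ := by
  obtain ⟨Γ', hΓ'_open, hΓ'_cone, hξ₀', c, hc, hΓ'⟩ := hΓ.exists_open_subcone hΓ_open hξ₀
  refine ⟨Γ', hΓ'_open, hΓ'_cone, hξ₀', ?_⟩
  obtain ⟨A, hA⟩ := exists_eLpNorm_STFT_le hs hg hF hF_supp p
  obtain ⟨C, hC⟩ := exists_lconvolution_enorm_FT_mul_weight_le hs hω hg.star F hc hΓ'
  set W := Γ.indicator (weightedFT ω F)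
  have hW : Measurable W := (measurable_weightedFT hω.1 hF).indicator hΓ_open.measurableSet
  have hW_fin : eLpNorm W q volume < ∞ := by
    rwa [eLpNorm_indicator_eq_eLpNorm_restrict hΓ_open.measurableSet,
      ← FLSemi_eq_eLpNorm_weightedFT hω.2.1]
  have pointwise (ξ) (hξ : ξ ∈ Γ') :
      eLpNorm (fun x => STFT g F x ξ) p volume * ENNReal.ofReal (ω ξ) ≤
        (A * C : ℝ≥0) * ((stretchedExp s ⋆ₗ W) ξ + stretchedExp s ξ) := by
    rw [ENNReal.coe_mul, mul_assoc]
    exact (mul_le_mul_left (hA ξ) _).trans (by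
      rw [mul_assoc]; exact mul_le_mul_right (hC ξ hξ) _)
  rw [ModSemi_eq_eLpNorm g F ω p (one_pos.trans_le hq).ne']
  calc eLpNorm (fun ξ => eLpNorm (fun x => STFT g F x ξ) p volume * ENNReal.ofReal (ω ξ)) q
        (volume.restrict Γ')
      ≤ (A * C : ℝ≥0) • eLpNorm ((stretchedExp s ⋆ₗ W) + stretchedExp s) q (volume.restrict Γ') :=
        eLpNorm_le_mul_eLpNorm_of_ae_le_mul'
          (ae_restrict_of_forall_mem hΓ'_open.measurableSet pointwise) q
    _ ≤ (A * C : ℝ≥0) • eLpNorm ((stretchedExp s ⋆ₗ W) + stretchedExp s) q volume := by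
        gcongr
        exact Measure.restrict_le_self
    _ < ∞ := ENNReal.mul_lt_top ENNReal.coe_lt_top
        (eLpNorm_stretchedExp_lconvolution_add_lt_top hs hq hW hW_fin)

end FourierLebesgueToModulation

section Reflection

variable {X : Type*} [MeasurableSpace X] {μ : Measure X}

lemma convolution_reflect_star [AddGroup X] [MeasurableAdd X] [MeasurableNeg X]
    [μ.IsNegInvariant] [μ.IsAddLeftInvariant] (g : X → ℂ) (x₀ : X) :
    ((fun x => g (x₀ - x)) ⋆[ContinuousLinearMap.mul ℂ ℂ, μ] star g) x₀ =
      (∫ x, ‖g x‖ ^ 2 ∂μ : ℝ) := by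
  rw [← integral_sub_left_eq_self (fun x => ‖g x‖ ^ 2) μ x₀, ← integral_complex_ofReal,
    convolution_def]
  simp only [ContinuousLinearMap.mul_apply', Pi.star_apply, Complex.star_def, mul_conj,
    normSq_eq_norm_sq]

lemma integral_norm_sq_pos [TopologicalSpace X] [OpensMeasurableSpace X] [μ.IsOpenPosMeasure]
    [IsFiniteMeasureOnCompacts μ] {E : Type*} [NormedAddCommGroup E] {g : X → E}
    (hg : Continuous g) (hg_supp : HasCompactSupport g) (hg₀ : g ≠ 0) : 0 < ∫ x, ‖g x‖ ^ 2 ∂μ := by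
  obtain ⟨x, hx⟩ := Function.ne_iff.1 hg₀
  have norm_sq_ne_zero : ‖g x‖ ^ 2 ≠ 0 := pow_ne_zero 2 (norm_ne_zero_iff.2 hx)
  have norm_sq_supp : HasCompactSupport fun x => ‖g x‖ ^ 2 :=
    hg_supp.comp_left (g := fun z : E => ‖z‖ ^ 2) (by rw [norm_zero, sq, zero_mul])
  exact (hg.norm.pow 2).integral_pos_of_hasCompactSupport_nonneg_nonzero norm_sq_supp
    (fun _ => sq_nonneg _) norm_sq_ne_zero

end Reflection

section ModulationToFourierLebesgue

variable {p q : ℝ≥0∞} {g F χ : EuclideanSpace ℝ (Fin d) → ℂ}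

lemma enorm_FT_mul_convolution_le (hp : 1 ≤ p) (hF : Integrable F) (hχ : Continuous χ)
    (hχ_int : Integrable χ) (hg : Continuous g) (hg_supp : HasCompactSupport g)
    (ξ : EuclideanSpace ℝ (Fin d)) :
    ‖FT (fun y => F y * (χ ⋆[ContinuousLinearMap.mul ℂ ℂ] star g) y) ξ‖ₑ ≤
      eLpNorm χ p.conjExponent volume * eLpNorm (fun x => STFT g F x ξ) p volume := by
  have := ENNReal.HolderConjugate.conjExponent hp
  rw [FT_mul_convolution hF hχ_int hg hg_supp]
  calc ‖∫ x, χ x * STFT g F x ξ‖ₑ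
      ≤ eLpNorm (χ • fun x => STFT g F x ξ) 1 volume := by
        rw [eLpNorm_one_eq_lintegral_enorm]
        exact enorm_integral_le_lintegral_enorm _
    _ ≤ eLpNorm χ p.conjExponent volume * eLpNorm (fun x => STFT g F x ξ) p volume :=
        eLpNorm_smul_le_mul_eLpNorm
          (continuous_STFT_left hF hg hg_supp ξ).aestronglyMeasurable hχ.aestronglyMeasurable

lemma FLSemi_mul_convolution_lt_top (hp : 1 ≤ p) (hq : q ≠ 0) {ω : EuclideanSpace ℝ (Fin d) → ℝ}
    (hω : ∀ ξ, 0 < ω ξ) (hF : Integrable F) (hχ : Continuous χ) (hχ_supp : HasCompactSupport χ)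
    (hg : Continuous g) (hg_supp : HasCompactSupport g) {Γ : Set (EuclideanSpace ℝ (Fin d))}
    (hfin : ModSemi g F ω p q Γ < ∞) :
    FLSemi ω q (fun y => F y * (χ ⋆[ContinuousLinearMap.mul ℂ ℂ] star g) y) Γ < ∞ := by
  have hχ_fin : eLpNorm χ p.conjExponent volume ≠ ∞ :=
    (hχ.memLp_of_hasCompactSupport hχ_supp).eLpNorm_ne_top
  rw [ModSemi_eq_eLpNorm g F ω p hq] at hfin
  rw [FLSemi_eq_eLpNorm_weightedFT hω]
  have pointwise (ξ : EuclideanSpace ℝ (Fin d)) :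
      ‖weightedFT ω (fun y => F y * (χ ⋆[ContinuousLinearMap.mul ℂ ℂ] star g) y) ξ‖ₑ ≤
        (eLpNorm χ p.conjExponent volume).toNNReal *
          ‖eLpNorm (fun x => STFT g F x ξ) p volume * ENNReal.ofReal (ω ξ)‖ₑ := by
    rw [enorm_eq_self, enorm_eq_self, weightedFT, ENNReal.coe_toNNReal hχ_fin, ← mul_assoc]
    exact mul_le_mul_left (enorm_FT_mul_convolution_le hp hF hχ
      (hχ.integrable_of_hasCompactSupport hχ_supp) hg hg_supp ξ) _
  exact (eLpNorm_le_mul_eLpNorm_of_ae_le_mul' (.of_forall pointwise) q).trans_lt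
    (ENNReal.mul_lt_top ENNReal.coe_lt_top hfin)

theorem IsSCutoff.exists_cutoff_FLSemi_lt_top {s : ℝ} (hs : 1 ≤ s) (hp : 1 ≤ p) (hq : q ≠ 0)
    {ω : EuclideanSpace ℝ (Fin d) → ℝ} (hω : ∀ ξ, 0 < ω ξ) (hg : IsSCutoff s g) (hg₀ : g ≠ 0)
    {f φ : EuclideanSpace ℝ (Fin d) → ℂ} (hf : LocallyIntegrable f) (hφ : IsSCutoff s φ)
    {x₀ : EuclideanSpace ℝ (Fin d)} (hφ₀ : φ x₀ ≠ 0) {Γ : Set (EuclideanSpace ℝ (Fin d))}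
    (hfin : ModSemi g (fun x => φ x * f x) ω p q Γ < ∞) :
    ∃ φ', IsSCutoff s φ' ∧ φ' x₀ ≠ 0 ∧ FLSemi ω q (fun x => φ' x * f x) Γ < ∞ := by
  have hg_cont := hg.1.continuous
  set χ : EuclideanSpace ℝ (Fin d) → ℂ := fun x => g (x₀ - x)
  have hχ : Continuous χ := hg_cont.comp (continuous_sub_left x₀)
  have hχ_supp : HasCompactSupport χ := hg.2.1.comp_homeomorph (Homeomorph.subLeft x₀)
  set ψ := χ ⋆[ContinuousLinearMap.mul ℂ ℂ] star g
  have hψ : IsSCutoff s ψ :=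
    hg.star.convolution (hχ.integrable_of_hasCompactSupport hχ_supp) hχ_supp
  have hψ₀ : ψ x₀ ≠ 0 := (convolution_reflect_star g x₀).trans_ne
    (ofReal_ne_zero.2 (integral_norm_sq_pos hg_cont hg.2.1 hg₀).ne')
  refine ⟨fun x => φ x * ψ x, hφ.mul hs hψ, mul_ne_zero hφ₀ hψ₀, ?_⟩
  simp only [mul_right_comm (φ _) (ψ _)]
  exact FLSemi_mul_convolution_lt_top hp hq hω (hφ.integrable_mul hf) hχ hχ_supp hg_cont hg.2.1 hfin

end ModulationToFourierLebesgue

theorem stmt10_general {d : ℕ} (s : ℝ) (hs : 1 < s) (p q : ℝ≥0∞) (hp : 1 ≤ p) (hq : 1 ≤ q)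
    (ω : EuclideanSpace ℝ (Fin d) → ℝ) (hω : IsSAdmissible s ω)
    (g : EuclideanSpace ℝ (Fin d) → ℂ) (hg : IsSCutoff s g) (hg0 : g ≠ 0)
    (f : EuclideanSpace ℝ (Fin d) → ℂ) (hf : LocallyIntegrable f) :
    WF_M s p q ω g f = WF_FL s q ω f := by
  ext ⟨x₀, ξ₀⟩
  refine and_congr_right fun _ => ⟨fun h φ hφ hφ₀ Γ hΓ_open hΓ hξ₀ => ?_,
    fun h φ hφ hφ₀ Γ hΓ_open hΓ hξ₀ => ?_⟩
  · by_contra hne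
    obtain ⟨Γ', hΓ'_open, hΓ', hξ₀', hfin⟩ := hΓ.exists_subcone_ModSemi_lt_top (p := p)
      (one_pos.trans hs) hq hω hg (hφ.integrable_mul hf) hφ.2.1.mul_right hΓ_open hξ₀
      (lt_top_iff_ne_top.2 hne)
    exact hfin.ne (h φ hφ hφ₀ Γ' hΓ'_open hΓ' hξ₀')
  · by_contra hne
    obtain ⟨φ', hφ', hφ'₀, hfin⟩ := IsSCutoff.exists_cutoff_FLSemi_lt_top hs.le hp
      (one_pos.trans_le hq).ne' hω.2.1 hg hg0 hf hφ hφ₀ (lt_top_iff_ne_top.2 hne)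
    exact hfin.ne (h φ' hφ' hφ'₀ Γ hΓ_open hΓ hξ₀)

theorem stmt10 {d : ℕ} (s : ℝ) (hs : 1 < s) (p q : ℝ≥0∞) (hp : 1 ≤ p) (hq : 1 ≤ q)
    (ω : EuclideanSpace ℝ (Fin d) → ℝ) (hω : IsSAdmissible s ω)
    (g : EuclideanSpace ℝ (Fin d) → ℂ) (hg : IsSCutoff s g) (hg0 : g ≠ 0)
    (f : EuclideanSpace ℝ (Fin d) → ℂ) (hf : Integrable f) (hfc : HasCompactSupport f) :
    WF_M s p q ω g f = WF_FL s q ω f :=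
  stmt10_general s hs p q hp hq ω hω g hg hg0 f hf.locallyIntegrable

end Paper
end
end
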